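/- arXiv:alg-geom/9506002 — 2 statements merged into one kernel-verified Lean document; each statement's English description precedes it below -/
import Mathlib

section
/- Let f : ℝ² → ℝ be a nonconstant real polynomial function of degree d in two variables such that every real critical point of f is nondegenerate and the degree-d homogeneous part f_d has no repeated real linear factors (for every (a,b) ≠ (0,0), (b·x − a·y)² does not divide f_d). Then the set of critical points of f is finite, and the number of critical points at which the Hessian determinant is positive (local extrema) minus the number at which it is negative (saddles) equals 1 − d_R, where d_R is the real degree of f. -/
open MvPolynomial Filter

/-- Evaluation of a polynomial in two variables at the point `(x, y)`. -/
noncomputable def evalP (f : MvPolynomial (Fin 2) ℝ) (x y : ℝ) : ℝ :=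
  MvPolynomial.eval ![x, y] f

/-- `p` is a critical point of `f`: both partial derivatives vanish at `p`. -/
def IsCriticalPt (f : MvPolynomial (Fin 2) ℝ) (p : ℝ × ℝ) : Prop :=
  evalP (pderiv 0 f) p.1 p.2 = 0 ∧ evalP (pderiv 1 f) p.1 p.2 = 0

/-- The multiplicity of the real linear form `b·x − a·y` in `F`: the largest `m`
such that `(b·x − a·y)^m` divides `F` in `ℝ[x,y]`. -/
noncomputable def linMult (F : MvPolynomial (Fin 2) ℝ) (a b : ℝ) : ℕ :=
  sSup {m : ℕ | (C b * X 0 - C a * X 1) ^ m ∣ F}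

/-- The "real degree" of a homogeneous polynomial `F`: the sum, over the points
`[a : b]` of the real projective line (represented by `[a : 1]` for `a ∈ ℝ`,
together with `[1 : 0]`), of the multiplicity of the real linear factor
`b·x − a·y` in `F`; i.e. the sum of the multiplicities of the real linear
factors of `F`. -/
noncomputable def realDegreeOf (F : MvPolynomial (Fin 2) ℝ) : ℕ :=
  (∑ᶠ a : ℝ, linMult F a 1) + linMult F 1 0

/-- The Hessian determinant `f_xx f_yy − f_xy²` of `f` at `p`. -/
noncomputable def hessDet (f : MvPolynomial (Fin 2) ℝ) (p : ℝ × ℝ) : ℝ :=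
  evalP (pderiv 0 (pderiv 0 f)) p.1 p.2 * evalP (pderiv 1 (pderiv 1 f)) p.1 p.2 -
    (evalP (pderiv 1 (pderiv 0 f)) p.1 p.2) ^ 2


open MvPolynomial Filter
set_option linter.unusedSimpArgs false

/-- evaluation at a point of the plane -/
noncomputable def EV (p : MvPolynomial (Fin 2) ℝ) (v : ℝ × ℝ) : ℝ := evalP p v.1 v.2

lemma EV_C (a : ℝ) (v : ℝ × ℝ) : EV (C a) v = a := by simp [EV, evalP]
lemma EV_X0 (v : ℝ × ℝ) : EV (X 0) v = v.1 := by simp [EV, evalP]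
lemma EV_X1 (v : ℝ × ℝ) : EV (X 1) v = v.2 := by simp [EV, evalP]
lemma EV_add (p q : MvPolynomial (Fin 2) ℝ) (v : ℝ × ℝ) : EV (p + q) v = EV p v + EV q v := by
  simp [EV, evalP]
lemma EV_sub (p q : MvPolynomial (Fin 2) ℝ) (v : ℝ × ℝ) : EV (p - q) v = EV p v - EV q v := by
  simp [EV, evalP]
lemma EV_mul (p q : MvPolynomial (Fin 2) ℝ) (v : ℝ × ℝ) : EV (p * q) v = EV p v * EV q v := by
  simp [EV, evalP]
lemma EV_zero (v : ℝ × ℝ) : EV 0 v = 0 := by simp [EV, evalP]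
lemma EV_one (v : ℝ × ℝ) : EV 1 v = 1 := by simp [EV, evalP]

lemma EV_hom {p : MvPolynomial (Fin 2) ℝ} {n : ℕ} (hp : p.IsHomogeneous n) (t : ℝ) (v : ℝ × ℝ) :
    EV p (t * v.1, t * v.2) = t ^ n * EV p v := by
  unfold EV evalP
  rw [eval_eq', eval_eq', Finset.mul_sum]
  apply Finset.sum_congr rfl
  intro m hm
  have hdeg := hp (mem_support_iff.mp hm)
  have : m 0 + m 1 = n := by
    rw [← hdeg]; simp [Finsupp.weight_apply, Finsupp.sum_fintype]
  rw [← this]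
  simp [Fin.prod_univ_two, mul_pow, pow_add]
  ring

lemma EV_strict (p : MvPolynomial (Fin 2) ℝ) (v : ℝ × ℝ) :
    HasStrictFDerivAt (EV p) (EV (pderiv 0 p) v • ContinuousLinearMap.fst ℝ ℝ ℝ +
      EV (pderiv 1 p) v • ContinuousLinearMap.snd ℝ ℝ ℝ) v := by
  induction p using MvPolynomial.induction_on with
  | C a =>
    have : EV (C a) = fun _ => a := by ext; simp [EV_C]
    rw [this]
    simpa [EV_zero] using hasStrictFDerivAt_const a v
  | add p q hp hq =>
    have : EV (p + q) = fun v => EV p v + EV q v := by ext; simp [EV_add]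
    rw [this]
    refine (hp.add hq).congr_fderiv ?_
    ext <;> simp [EV_add]
  | mul_X p i hp =>
    have : EV (p * X i) = fun v => EV p v * EV (X i) v := by ext; simp [EV_mul]
    rw [this]
    fin_cases i
    · have h0 : EV (X 0) = fun v : ℝ × ℝ => v.1 := by ext; simp [EV_X0]
      have hx : HasStrictFDerivAt (EV (X 0)) (ContinuousLinearMap.fst ℝ ℝ ℝ) v := by
        rw [h0]; exact hasStrictFDerivAt_fst
      refine (hp.mul hx).congr_fderiv ?_
      ext <;> simp [EV_add, EV_mul, pderiv_mul, EV_X0, EV_X1, EV_one, EV_zero, pderiv_X_of_ne, mul_comm]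
    · have h0 : EV (X 1) = fun v : ℝ × ℝ => v.2 := by ext; simp [EV_X1]
      have hx : HasStrictFDerivAt (EV (X 1)) (ContinuousLinearMap.snd ℝ ℝ ℝ) v := by
        rw [h0]; exact hasStrictFDerivAt_snd
      refine (hp.mul hx).congr_fderiv ?_
      ext <;> simp [EV_add, EV_mul, pderiv_mul, EV_X0, EV_X1, EV_one, EV_zero, pderiv_X_of_ne, mul_comm]

@[fun_prop]
lemma EV_cont (p : MvPolynomial (Fin 2) ℝ) : Continuous (EV p) :=
  continuous_iff_continuousAt.2 fun v => (EV_strict p v).continuousAt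

lemma pderiv_swap (p : MvPolynomial (Fin 2) ℝ) :
    pderiv 0 (pderiv 1 p) = pderiv 1 (pderiv 0 p) := by
  induction p using MvPolynomial.induction_on with
  | C a => simp
  | add p q hp hq => simp [hp, hq]
  | mul_X p i hp =>
    fin_cases i <;> simp [pderiv_mul, hp, pderiv_X_of_ne, add_comm]

/-- derivative along a curve -/
lemma EV_comp (p : MvPolynomial (Fin 2) ℝ) {x y : ℝ → ℝ} {x' y' t : ℝ} (hx : HasDerivAt x x' t)
    (hy : HasDerivAt y y' t) : HasDerivAt (fun s => EV p (x s, y s))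
      (EV (pderiv 0 p) (x t, y t) * x' + EV (pderiv 1 p) (x t, y t) * y') t := by
  have := (EV_strict p (x t, y t)).hasFDerivAt.comp_hasDerivAt t (hx.prodMk hy)
  simp only [add_apply, smul_apply,
    ContinuousLinearMap.coe_fst', ContinuousLinearMap.coe_snd', smul_eq_mul] at this
  exact this

lemma line_dvd (H : MvPolynomial (Fin 2) ℝ) (a b : ℝ) (hab : (a, b) ≠ ((0 : ℝ), (0 : ℝ)))
    (h : ∀ t : ℝ, EV H (t * a, t * b) = 0) : (C b * X 0 - C a * X 1) ∣ H := by
  have hn : a ^ 2 + b ^ 2 ≠ 0 := by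
    intro h0
    apply hab
    have ha : a = 0 := by nlinarith [sq_nonneg a, sq_nonneg b]
    have hb : b = 0 := by nlinarith [sq_nonneg a, sq_nonneg b]
    simp [ha, hb]
  set n := a ^ 2 + b ^ 2 with hndef
  set l : MvPolynomial (Fin 2) ℝ := C (a / n) * X 0 + C (b / n) * X 1 with hl
  set L : MvPolynomial (Fin 2) ℝ := C b * X 0 - C a * X 1 with hL
  let σ : MvPolynomial (Fin 2) ℝ →ₐ[ℝ] MvPolynomial (Fin 2) ℝ := bind₁ ![C a * l, C b * l]
  have key : ∀ p, L ∣ p - σ p := by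
    intro p
    induction p using MvPolynomial.induction_on with
    | C c => simp [σ]
    | add p q hp hq =>
      have := dvd_add hp hq
      rw [map_add]; convert this using 1; ring
    | mul_X p i hp =>
      have hX : L ∣ X i - σ (X i) := by
        fin_cases i
        · refine ⟨C (b / n), ?_⟩
          have e1 : (1 : MvPolynomial (Fin 2) ℝ) = C (a * (a / n)) + C (b * (b / n)) := by
            rw [← C_add, ← C_1]; congr 1; field_simp; rw [hndef]
          have e2 : C (a * (b / n)) = (C (b * (a / n)) : MvPolynomial (Fin 2) ℝ) := by
            congr 1; ring
          simp only [σ, hL, hl]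
          simp only [C_mul] at e1 e2
          simp
          linear_combination (X 0) * e1
        · refine ⟨-C (a / n), ?_⟩
          have e1 : (1 : MvPolynomial (Fin 2) ℝ) = C (a * (a / n)) + C (b * (b / n)) := by
            rw [← C_add, ← C_1]; congr 1; field_simp; rw [hndef]
          simp only [σ, hL, hl]
          simp only [C_mul] at e1
          simp
          linear_combination (X 1) * e1
      have : p * X i - σ (p * X i) = (p - σ p) * X i + σ p * (X i - σ (X i)) := by
        rw [map_mul]; ring
      rw [this]
      exact dvd_add (dvd_mul_of_dvd_left hp _) (dvd_mul_of_dvd_right hX _)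
  have hz : σ H = 0 := by
    apply MvPolynomial.funext
    intro x
    have := h (eval x l)
    simp only [EV, evalP] at this
    rw [map_zero]
    simp only [σ]
    rw [← this]
    have e : eval x (bind₁ ![C a * l, C b * l] H) =
        eval (fun i => eval x (![C a * l, C b * l] i)) H := by
      exact eval₂Hom_bind₁ (RingHom.id ℝ) x ![C a * l, C b * l] H
    rw [e]
    congr 2
    funext i
    fin_cases i <;> simp [mul_comm]
  have := key H
  rwa [hz, sub_zero] at this

open MvPolynomial Filter

lemma euler_EV {F : MvPolynomial (Fin 2) ℝ} {d : ℕ} (hF : F.IsHomogeneous d) (v : ℝ × ℝ) :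
    v.1 * EV (pderiv 0 F) v + v.2 * EV (pderiv 1 F) v = d * EV F v := by
  have h := congrArg (fun p => EV p v) hF.sum_X_mul_pderiv
  simp only [Fin.sum_univ_two, EV_add, EV_mul, EV_X0, EV_X1] at h
  rw [h]
  simp [EV, evalP]

lemma EV_lin (a b : ℝ) (v : ℝ × ℝ) : EV (C b * X 0 - C a * X 1) v = b * v.1 - a * v.2 := by
  simp [EV_sub, EV_mul, EV_C, EV_X0, EV_X1]

lemma grad_ne {F : MvPolynomial (Fin 2) ℝ} {d : ℕ} (hF : F.IsHomogeneous d) (hd : 1 ≤ d)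
    (hsq : ∀ a b : ℝ, (a, b) ≠ ((0 : ℝ), (0 : ℝ)) → ¬ ((C b * X 0 - C a * X 1) ^ 2 ∣ F))
    (v : ℝ × ℝ) (hv : v ≠ (0, 0)) (h0 : EV (pderiv 0 F) v = 0) (h1 : EV (pderiv 1 F) v = 0) :
    False := by
  obtain ⟨a, b⟩ := v
  have hdpos : (d : ℝ) ≠ 0 := by exact_mod_cast (by omega : d ≠ 0)
  have hv0 : EV F (a, b) = 0 := by
    have := euler_EV hF (a, b)
    rw [h0, h1] at this
    simp [hdpos] at this
    tauto
  obtain ⟨G, hG⟩ := line_dvd F a b hv (fun t => by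
    have := EV_hom hF t (a, b); simp only at this; rw [this, hv0, mul_zero])
  apply hsq a b hv
  have hGl : ∀ t : ℝ, EV G (t * a, t * b) = 0 := by
    intro t
    have k0 := EV_hom (hF.pderiv (i := 0)) t (a, b)
    have k1 := EV_hom (hF.pderiv (i := 1)) t (a, b)
    rw [h0, mul_zero, hG] at k0
    rw [h1, mul_zero, hG] at k1
    simp only [pderiv_mul, EV_add, EV_mul, EV_lin] at k0 k1
    have e0 : EV (pderiv 0 (C b * X 0 - C a * X 1)) (t * a, t * b) = b := by
      simp [EV_C]
    have e1 : EV (pderiv 1 (C b * X 0 - C a * X 1)) (t * a, t * b) = - a := by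
      simp [EV, evalP]
    rw [e0] at k0
    rw [e1] at k1
    have k0' : b * EV G (t * a, t * b) = 0 := by linarith
    have k1' : a * EV G (t * a, t * b) = 0 := by linarith
    by_contra hne
    rcases mul_eq_zero.1 k0' with h | h
    · rcases mul_eq_zero.1 k1' with h' | h'
      · exact hv (by rw [h, h'])
      · exact hne h'
    · exact hne h
  obtain ⟨G', hG'⟩ := line_dvd G a b hv hGl
  refine ⟨G', ?_⟩
  rw [hG, hG']; ring

lemma linMult_eq {F : MvPolynomial (Fin 2) ℝ} {d : ℕ} (hF : F.IsHomogeneous d)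
    (hsq : ∀ a b : ℝ, (a, b) ≠ ((0 : ℝ), (0 : ℝ)) → ¬ ((C b * X 0 - C a * X 1) ^ 2 ∣ F))
    (a b : ℝ) (hab : (a, b) ≠ ((0 : ℝ), (0 : ℝ))) :
    linMult F a b = if EV F (a, b) = 0 then 1 else 0 := by
  have hle : ∀ m ∈ {m : ℕ | (C b * X 0 - C a * X 1) ^ m ∣ F}, m ≤ 1 := by
    intro m hm
    by_contra h
    exact hsq a b hab ((pow_dvd_pow _ (by omega)).trans hm)
  unfold linMult
  split_ifs with h
  · apply le_antisymm
    · exact csSup_le ⟨0, by simp⟩ hle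
    · apply le_csSup ⟨1, hle⟩
      simp only [Set.mem_ofPred_eq, pow_one]
      apply line_dvd F a b hab
      intro t
      have := EV_hom hF t (a, b); simp only at this; rw [this, h, mul_zero]
  · rw [← Nat.le_zero]
    refine csSup_le ⟨0, by simp⟩ ?_
    intro m hm
    have := hle m hm
    by_contra hm0
    have hm1 : m = 1 := by omega
    subst hm1
    simp only [Set.mem_ofPred_eq, pow_one] at hm
    obtain ⟨G, rfl⟩ := hm
    apply h
    rw [EV_mul, EV_lin]; ring

open MvPolynomial Filter Topology

/-- Winding of a curve `(u, v)` all of whose crossings of the axis `u = 0` are clockwise. -/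
lemma wind_jump (u v u' v' : ℝ → ℝ) (a b : ℝ) (hab : a ≤ b)
    (hu : ∀ t, HasDerivAt u (u' t) t) (hv : ∀ t, HasDerivAt v (v' t) t)
    (hu' : Continuous u') (hv' : Continuous v')
    (hne : ∀ t, u t ^ 2 + v t ^ 2 ≠ 0)
    (Z : Finset ℝ) (hZ : ∀ t ∈ Set.Icc a b, u t = 0 ↔ t ∈ Z) (hZs : ∀ z ∈ Z, z ∈ Set.Ioo a b)
    (hpos : ∀ z ∈ Z, 0 < u' z * v z) :
    ∫ t in a..b, (u t * v' t - v t * u' t) / (u t ^ 2 + v t ^ 2) =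
      Real.arctan (v b / u b) - Real.arctan (v a / u a) - Real.pi * Z.card := by
  classical
  have huc : Continuous u := continuous_iff_continuousAt.2 fun t => (hu t).continuousAt
  have hvc : Continuous v := continuous_iff_continuousAt.2 fun t => (hv t).continuousAt
  let n : ℝ → ℝ := fun t => ((Z.filter (fun z => z < t)).card : ℝ)
  let Θ : ℝ → ℝ := fun t => if u t = 0 then -(Real.pi / 2) - Real.pi * n t
    else Real.arctan (v t / u t) - Real.pi * n t
  -- near any point, the other points of Z are avoided
  have hZev : ∀ t, ∀ᶠ s in 𝓝 t, ∀ z ∈ Z, z ≠ t → ((z < s ↔ z < t) ∧ s ≠ z) := by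
    intro t
    rw [Filter.eventually_all_finset]
    intro z hz
    by_cases hzt : z = t
    · exact Eventually.of_forall fun s h => absurd hzt h
    · rcases lt_or_gt_of_ne hzt with h | h
      · filter_upwards [lt_mem_nhds h] with s hs _
        exact ⟨by simp [hs, h], hs.ne'⟩
      · filter_upwards [gt_mem_nhds h] with s hs _
        exact ⟨⟨fun h' => absurd h' (not_lt.2 hs.le), fun h' => absurd h' (not_lt.2 h.le)⟩, hs.ne⟩
  have hder : ∀ t ∈ Set.uIcc a b,
      HasDerivAt Θ ((u t * v' t - v t * u' t) / (u t ^ 2 + v t ^ 2)) t := by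
    intro t ht
    rw [Set.uIcc_of_le hab] at ht
    by_cases h0 : u t = 0
    · have htZ := (hZ t ht).1 h0
      have hvt : v t ≠ 0 := by
        intro h; apply hne t; simp [h0, h]
      have hp := hpos t htZ
      -- the quotient u / v is increasing at t
      have hq : HasDerivAt (fun s => u s / v s) ((u' t * v t - u t * v' t) / v t ^ 2) t :=
        (hu t).div (hv t) hvt
      have hq0 : u t / v t = 0 := by simp [h0]
      have hqpos : 0 < (u' t * v t - u t * v' t) / v t ^ 2 := by
        rw [h0, zero_mul, sub_zero]; positivity
      have hsl := hq.tendsto_slope.eventually (lt_mem_nhds hqpos)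
      rw [eventually_nhdsWithin_iff] at hsl
      have hev : Θ =ᶠ[𝓝 t] fun s => -(Real.pi / 2) - Real.pi * n t - Real.arctan (u s / v s) := by
        filter_upwards [hsl, hZev t, hvc.continuousAt.eventually_ne hvt] with s hs hs2 hs3
        rcases lt_trichotomy s t with hlt | heq | hgt
        · have h1 := hs hlt.ne
          rw [slope_def_field, hq0, sub_zero] at h1
          have h2 : u s / v s < 0 := by
            by_contra hh
            push Not at hh
            have : u s / v s / (s - t) ≤ 0 := div_nonpos_of_nonneg_of_nonpos hh (by linarith)
            linarith
          have h3 : u s ≠ 0 := by rintro h; simp [h] at h2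
          have h4 : n s = n t := by
            simp only [n]
            congr 2
            apply Finset.filter_congr
            intro z hz
            by_cases hzt : z = t
            · subst hzt; simp [hlt.le]
            · exact (hs2 z hz hzt).1
          simp only [Θ, if_neg h3, h4]
          have := Real.arctan_inv_of_neg h2
          rw [inv_div] at this
          rw [this]; ring
        · subst heq
          simp [Θ, h0]
        · have h1 := hs hgt.ne'
          rw [slope_def_field, hq0, sub_zero] at h1
          have h2 : 0 < u s / v s := by
            by_contra hh
            push Not at hh
            have : u s / v s / (s - t) ≤ 0 := div_nonpos_of_nonpos_of_nonneg hh (by linarith)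
            linarith
          have h3 : u s ≠ 0 := by rintro h; simp [h] at h2
          have h4 : n s = n t + 1 := by
            simp only [n]
            have : Z.filter (fun z => z < s) = insert t (Z.filter (fun z => z < t)) := by
              ext z
              simp only [Finset.mem_filter, Finset.mem_insert]
              by_cases hzt : z = t
              · subst hzt; simp [htZ, hgt]
              · simp only [hzt, false_or]
                constructor
                · rintro ⟨hz, h⟩; exact ⟨hz, (hs2 z hz hzt).1.1 h⟩
                · rintro ⟨hz, h⟩; exact ⟨hz, (hs2 z hz hzt).1.2 h⟩
            rw [this, Finset.card_insert_of_notMem (by simp)]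
            push_cast; ring
          simp only [Θ, if_neg h3, h4]
          have := Real.arctan_inv_of_pos h2
          rw [inv_div] at this
          rw [this]; ring
      have hd := (hq.arctan.const_sub (-(Real.pi / 2) - Real.pi * n t)).congr_of_eventuallyEq hev
      refine hd.congr_deriv ?_
      rw [h0]; field_simp; ring
    · have hev : Θ =ᶠ[𝓝 t] fun s => Real.arctan (v s / u s) - Real.pi * n t := by
        filter_upwards [hZev t, huc.continuousAt.eventually_ne h0] with s hs2 hs3
        have h4 : n s = n t := by
          simp only [n]
          congr 2
          apply Finset.filter_congr
          intro z hz
          have hzt : z ≠ t := by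
            rintro rfl
            exact h0 ((hZ z ht).2 hz)
          exact (hs2 z hz hzt).1
        simp only [Θ, if_neg hs3, h4]
      have hq : HasDerivAt (fun s => v s / u s) ((v' t * u t - v t * u' t) / u t ^ 2) t :=
        (hv t).div (hu t) h0
      have hd := (hq.arctan.sub_const (Real.pi * n t)).congr_of_eventuallyEq hev
      refine hd.congr_deriv ?_
      have := hne t
      field_simp
  rw [intervalIntegral.integral_eq_sub_of_hasDerivAt hder]
  · have ha : u a ≠ 0 := fun h =>
      absurd (hZs a ((hZ a ⟨le_rfl, hab⟩).1 h)).1 (lt_irrefl _)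
    have hb : u b ≠ 0 := fun h =>
      absurd (hZs b ((hZ b ⟨hab, le_rfl⟩).1 h)).2 (lt_irrefl _)
    have na : n a = 0 := by
      simp only [n, Nat.cast_eq_zero, Finset.card_eq_zero, Finset.filter_eq_empty_iff]
      intro z hz; exact not_lt.2 (hZs z hz).1.le
    have nb : n b = Z.card := by
      simp only [n]
      rw [Finset.filter_true_of_mem]
      intro z hz; exact (hZs z hz).2
    simp only [Θ, if_neg ha, if_neg hb, na, nb]; ring
  · apply Continuous.intervalIntegrable
    exact Continuous.div (by fun_prop) (by fun_prop) hne

open MvPolynomial Filter Topology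

/-- polar point -/
noncomputable def pt (R θ : ℝ) : ℝ × ℝ := (R * Real.cos θ, R * Real.sin θ)

/-- angular derivative -/
noncomputable def DT (P : MvPolynomial (Fin 2) ℝ) (R θ : ℝ) : ℝ :=
  EV (pderiv 0 P) (pt R θ) * (R * -Real.sin θ) + EV (pderiv 1 P) (pt R θ) * (R * Real.cos θ)

/-- radial derivative -/
noncomputable def DR (P : MvPolynomial (Fin 2) ℝ) (R θ : ℝ) : ℝ :=
  EV (pderiv 0 P) (pt R θ) * Real.cos θ + EV (pderiv 1 P) (pt R θ) * Real.sin θ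

lemma hasDerivAt_EV_pt (P : MvPolynomial (Fin 2) ℝ) (R θ : ℝ) :
    HasDerivAt (fun s => EV P (pt R s)) (DT P R θ) θ :=
  EV_comp P ((Real.hasDerivAt_cos θ).const_mul R) ((Real.hasDerivAt_sin θ).const_mul R)

@[fun_prop]
lemma pt_cont : Continuous (fun p : ℝ × ℝ => pt p.1 p.2) := by unfold pt; fun_prop

@[fun_prop]
lemma EV_pt_cont (P : MvPolynomial (Fin 2) ℝ) : Continuous (fun p : ℝ × ℝ => EV P (pt p.1 p.2)) :=
  (EV_cont P).comp pt_cont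

@[fun_prop]
lemma DT_cont (P : MvPolynomial (Fin 2) ℝ) : Continuous (fun p : ℝ × ℝ => DT P p.1 p.2) := by
  unfold DT; fun_prop

@[fun_prop]
lemma DR_cont (P : MvPolynomial (Fin 2) ℝ) : Continuous (fun p : ℝ × ℝ => DR P p.1 p.2) := by
  unfold DR; fun_prop

@[fun_prop]
lemma EV_pt_cont1 (P : MvPolynomial (Fin 2) ℝ) (R : ℝ) : Continuous (fun θ => EV P (pt R θ)) :=
  Continuous.comp (g := EV P) (f := fun θ => pt R θ) (EV_cont P) (by unfold pt; fun_prop)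

@[fun_prop]
lemma DT_cont1 (P : MvPolynomial (Fin 2) ℝ) (R : ℝ) : Continuous (fun θ => DT P R θ) := by
  unfold DT; fun_prop

section
variable {F : MvPolynomial (Fin 2) ℝ} {d : ℕ}

lemma roots_finite (hF : F.IsHomogeneous d) (hd : 1 ≤ d)
    (hsq : ∀ a b : ℝ, (a, b) ≠ ((0 : ℝ), (0 : ℝ)) → ¬ ((C b * X 0 - C a * X 1) ^ 2 ∣ F)) :
    {t : ℝ | EV F (t, 1) = 0}.Finite := by
  let q : Polynomial ℝ := aeval ![Polynomial.X, 1] F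
  have hq : ∀ t, q.eval t = EV F (t, 1) := by
    intro t
    have : (Polynomial.aeval t) (aeval ![Polynomial.X, (1 : Polynomial ℝ)] F) =
        aeval (fun i => Polynomial.aeval t (![Polynomial.X, (1 : Polynomial ℝ)] i)) F := by
      rw [← AlgHom.comp_apply, comp_aeval]
    simp only [Polynomial.coe_aeval_eq_eval] at this
    simp only [q, EV, evalP]
    rw [this, MvPolynomial.aeval_eq_eval]
    congr 2
    funext i
    fin_cases i <;> simp
  have hq0 : q ≠ 0 := by
    intro h
    have hz : ∀ t, EV F (t, 1) = 0 := fun t => by rw [← hq, h, Polynomial.eval_zero]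
    have h1 := EV_comp F (hasDerivAt_id (0 : ℝ)) (hasDerivAt_const (0 : ℝ) (1 : ℝ))
    have h2 : (fun s : ℝ => EV F (id s, 1)) = fun _ => 0 := by funext s; exact hz s
    rw [h2] at h1
    have h3 := h1.unique (hasDerivAt_const (0 : ℝ) (0 : ℝ))
    simp at h3
    have h4 := euler_EV hF (0, 1)
    simp [hz] at h4
    exact grad_ne hF hd hsq (0, 1) (by simp) h3 h4
  refine (q.roots.toFinset.finite_toSet).subset ?_
  intro t ht
  simp only [Finset.mem_coe, Multiset.mem_toFinset, Polynomial.mem_roots hq0, Polynomial.IsRoot, hq]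
  exact ht

lemma exists_Z (hF : F.IsHomogeneous d) (hd : 1 ≤ d)
    (hsq : ∀ a b : ℝ, (a, b) ≠ ((0 : ℝ), (0 : ℝ)) → ¬ ((C b * X 0 - C a * X 1) ^ 2 ∣ F)) :
    ∃ Z : Finset ℝ, Z.card = realDegreeOf F ∧ (∀ z ∈ Z, 0 ≤ z ∧ z < Real.pi) ∧
      ∀ θ, 0 ≤ θ → θ < Real.pi → (EV F (pt 1 θ) = 0 ↔ θ ∈ Z) := by
  classical
  have hfin := roots_finite hF hd hsq
  let S := hfin.toFinset
  have hS : ∀ t, t ∈ S ↔ EV F (t, 1) = 0 := by intro t; simp [S]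
  let ψ : ℝ → ℝ := fun t => Real.pi / 2 - Real.arctan t
  have hψ0 : ∀ t, 0 < ψ t := fun t => by have := Real.arctan_lt_pi_div_two t; simp only [ψ]; linarith
  have hψ1 : ∀ t, ψ t < Real.pi := fun t => by
    have := Real.neg_pi_div_two_lt_arctan t; simp only [ψ]; linarith
  have hψi : Function.Injective ψ := by
    intro s t h
    simp only [ψ] at h
    exact Real.arctan_injective (by linarith)
  let W : Finset ℝ := if EV F (1, 0) = 0 then {0} else ∅
  have hW : ∀ w, w ∈ W ↔ w = 0 ∧ EV F (1, 0) = 0 := by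
    intro w; simp only [W]; split_ifs with h <;> simp [h]
  refine ⟨S.image ψ ∪ W, ?_, ?_, ?_⟩
  · rw [Finset.card_union_of_disjoint, Finset.card_image_of_injective _ hψi]
    · unfold realDegreeOf
      rw [finsum_eq_sum_of_support_subset (s := S)]
      · rw [linMult_eq hF hsq 1 0 (by simp)]
        congr 1
        · rw [Finset.card_eq_sum_ones]
          apply Finset.sum_congr rfl
          intro t ht
          rw [linMult_eq hF hsq t 1 (by simp), if_pos ((hS t).1 ht)]
        · simp only [W]; split_ifs <;> simp
      · intro t ht
        simp only [Function.mem_support, linMult_eq hF hsq t 1 (by simp)] at ht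
        simp only [Finset.mem_coe, hS]
        by_contra h
        simp [h] at ht
    · rw [Finset.disjoint_left]
      intro x hx hx'
      obtain ⟨t, -, rfl⟩ := Finset.mem_image.1 hx
      exact (hψ0 t).ne' ((hW _).1 hx').1
  · intro z hz
    rcases Finset.mem_union.1 hz with h | h
    · obtain ⟨t, -, rfl⟩ := Finset.mem_image.1 h
      exact ⟨(hψ0 t).le, hψ1 t⟩
    · rw [((hW _).1 h).1]; exact ⟨le_rfl, Real.pi_pos⟩
  · intro θ h0 h1
    rw [Finset.mem_union, hW]
    rcases h0.eq_or_lt with rfl | h0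
    · have : (0 : ℝ) ∉ S.image ψ := by
        intro h
        obtain ⟨t, -, ht⟩ := Finset.mem_image.1 h
        exact (hψ0 t).ne' ht
      simp [this, pt]
    · have hs := Real.sin_pos_of_pos_of_lt_pi h0 h1
      have hpt : EV F (pt 1 θ) = Real.sin θ ^ d * EV F (Real.cos θ / Real.sin θ, 1) := by
        rw [← EV_hom hF]
        simp only [pt]
        congr 2 <;> field_simp
      have hψt : ψ (Real.cos θ / Real.sin θ) = θ := by
        have : Real.cos θ / Real.sin θ = Real.tan (Real.pi / 2 - θ) := by
          rw [Real.tan_pi_div_two_sub, Real.tan_eq_sin_div_cos, inv_div]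
        simp only [ψ]
        rw [this, Real.arctan_tan (by linarith) (by linarith)]; ring
      rw [hpt, mul_eq_zero, or_iff_right (pow_pos hs d).ne', ← hS]
      constructor
      · intro h
        exact Or.inl (Finset.mem_image.2 ⟨_, h, hψt⟩)
      · rintro (h | h)
        · obtain ⟨t, ht, hte⟩ := Finset.mem_image.1 h
          rw [← hψt] at hte
          rwa [← hψi hte]
        · exact absurd h.1 h0.ne'

lemma hom_index (hF : F.IsHomogeneous d) (hd : 1 ≤ d)
    (hsq : ∀ a b : ℝ, (a, b) ≠ ((0 : ℝ), (0 : ℝ)) → ¬ ((C b * X 0 - C a * X 1) ^ 2 ∣ F)) :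
    ∫ θ in (-Real.pi)..Real.pi, (EV (pderiv 0 F) (pt 1 θ) * DT (pderiv 1 F) 1 θ -
      EV (pderiv 1 F) (pt 1 θ) * DT (pderiv 0 F) 1 θ) /
      (EV (pderiv 0 F) (pt 1 θ) ^ 2 + EV (pderiv 1 F) (pt 1 θ) ^ 2) =
      2 * Real.pi * (1 - (realDegreeOf F : ℝ)) := by
  obtain ⟨Z, hcard, hZr, hZ⟩ := exists_Z hF hd hsq
  set a : ℝ → ℝ := fun θ => EV (pderiv 0 F) (pt 1 θ) with ha
  set b : ℝ → ℝ := fun θ => EV (pderiv 1 F) (pt 1 θ) with hb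
  set a' : ℝ → ℝ := fun θ => DT (pderiv 0 F) 1 θ with ha'
  set b' : ℝ → ℝ := fun θ => DT (pderiv 1 F) 1 θ with hb'
  have hda : ∀ θ, HasDerivAt a (a' θ) θ := hasDerivAt_EV_pt _ 1
  have hdb : ∀ θ, HasDerivAt b (b' θ) θ := hasDerivAt_EV_pt _ 1
  have hac' : Continuous a' := DT_cont1 _ 1
  have hbc' : Continuous b' := DT_cont1 _ 1
  have hac : Continuous a := EV_pt_cont1 _ 1
  have hbc : Continuous b := EV_pt_cont1 _ 1
  have hne0 : ∀ θ, a θ ^ 2 + b θ ^ 2 ≠ 0 := by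
    intro θ h
    have h1 : a θ = 0 := by nlinarith [sq_nonneg (a θ), sq_nonneg (b θ)]
    have h2 : b θ = 0 := by nlinarith [sq_nonneg (a θ), sq_nonneg (b θ)]
    refine grad_ne hF hd hsq (pt 1 θ) ?_ h1 h2
    intro h
    simp only [pt, Prod.mk.injEq, one_mul] at h
    have := Real.cos_sq_add_sin_sq θ
    rw [h.1, h.2] at this; simp at this
  let A : ℝ → ℝ := fun θ => a θ * Real.cos θ + b θ * Real.sin θ
  let B : ℝ → ℝ := fun θ => b θ * Real.cos θ - a θ * Real.sin θ
  let A' : ℝ → ℝ := fun θ => (a' θ * Real.cos θ + a θ * -Real.sin θ) +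
    (b' θ * Real.sin θ + b θ * Real.cos θ)
  let B' : ℝ → ℝ := fun θ => (b' θ * Real.cos θ + b θ * -Real.sin θ) -
    (a' θ * Real.sin θ + a θ * Real.cos θ)
  have hdA : ∀ θ, HasDerivAt A (A' θ) θ := fun θ =>
    ((hda θ).mul (Real.hasDerivAt_cos θ)).add ((hdb θ).mul (Real.hasDerivAt_sin θ))
  have hdB : ∀ θ, HasDerivAt B (B' θ) θ := fun θ =>
    ((hdb θ).mul (Real.hasDerivAt_cos θ)).sub ((hda θ).mul (Real.hasDerivAt_sin θ))
  have hAφ : ∀ θ, A θ = d * EV F (pt 1 θ) := by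
    intro θ
    rw [← euler_EV hF]
    simp only [A, ha, hb, pt]; ring
  have hA'B : ∀ θ, A' θ = d * B θ := by
    intro θ
    have h1 : HasDerivAt A (d * DT F 1 θ) θ := by
      have : A = fun θ => d * EV F (pt 1 θ) := funext hAφ
      rw [this]
      exact (hasDerivAt_EV_pt F 1 θ).const_mul _
    rw [(hdA θ).unique h1]
    simp only [B, DT, ha, hb]; ring
  have hsum : ∀ θ, A θ ^ 2 + B θ ^ 2 = a θ ^ 2 + b θ ^ 2 := by
    intro θ
    simp only [A, B]
    linear_combination (a θ ^ 2 + b θ ^ 2) * Real.cos_sq_add_sin_sq θ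
  have hne : ∀ θ, A θ ^ 2 + B θ ^ 2 ≠ 0 := fun θ => by rw [hsum]; exact hne0 θ
  have hdR : (0 : ℝ) < d := by exact_mod_cast hd
  have hcA' : Continuous A' := by fun_prop
  have hcB' : Continuous B' := by fun_prop
  have hcA : Continuous A := by fun_prop
  have hcB : Continuous B := by fun_prop
  let w : ℝ → ℝ := fun θ => (A θ * B' θ - B θ * A' θ) / (A θ ^ 2 + B θ ^ 2)
  have hwc : Continuous w := Continuous.div (by fun_prop) (by fun_prop) hne
  have hintegral : ∀ θ, (a θ * b' θ - b θ * a' θ) / (a θ ^ 2 + b θ ^ 2) = 1 + w θ := by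
    intro θ
    have h1 := hne0 θ
    simp only [w]
    rw [hsum]
    field_simp
    simp only [A, B, A', B']
    linear_combination (-(a θ * b' θ - b θ * a' θ) + (a θ ^ 2 + b θ ^ 2)) * Real.cos_sq_add_sin_sq θ
  -- symmetry
  set ε : ℝ := (-1) ^ (d - 1) with hε
  have hptpi : ∀ θ, pt 1 (θ + Real.pi) = (-1 * (pt 1 θ).1, -1 * (pt 1 θ).2) := by
    intro θ; simp [pt, Real.cos_add_pi, Real.sin_add_pi]
  have hεsq : ε ^ 2 = 1 := by rw [hε, ← pow_mul, mul_comm, pow_mul]; simp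
  have hap : ∀ θ, a (θ + Real.pi) = ε * a θ := fun θ => by
    simp only [ha]; rw [hptpi, EV_hom (hF.pderiv)]
  have hbp : ∀ θ, b (θ + Real.pi) = ε * b θ := fun θ => by
    simp only [hb]; rw [hptpi, EV_hom (hF.pderiv)]
  have hap' : ∀ θ, a' (θ + Real.pi) = ε * a' θ := fun θ => by
    have h1 := (hda (θ + Real.pi)).comp_add_const θ Real.pi
    have h2 : (fun x => a (x + Real.pi)) = fun x => ε * a x := funext hap
    rw [h2] at h1
    exact h1.unique ((hda θ).const_mul ε)
  have hbp' : ∀ θ, b' (θ + Real.pi) = ε * b' θ := fun θ => by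
    have h1 := (hdb (θ + Real.pi)).comp_add_const θ Real.pi
    have h2 : (fun x => b (x + Real.pi)) = fun x => ε * b x := funext hbp
    rw [h2] at h1
    exact h1.unique ((hdb θ).const_mul ε)
  have hAp : ∀ θ, A (θ + Real.pi) = -ε * A θ := fun θ => by
    simp only [A, hap, hbp, Real.cos_add_pi, Real.sin_add_pi]; ring
  have hBp : ∀ θ, B (θ + Real.pi) = -ε * B θ := fun θ => by
    simp only [B, hap, hbp, Real.cos_add_pi, Real.sin_add_pi]; ring
  have hA'p : ∀ θ, A' (θ + Real.pi) = -ε * A' θ := fun θ => by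
    simp only [A', hap, hbp, hap', hbp', Real.cos_add_pi, Real.sin_add_pi]; ring
  have hB'p : ∀ θ, B' (θ + Real.pi) = -ε * B' θ := fun θ => by
    simp only [B', hap, hbp, hap', hbp', Real.cos_add_pi, Real.sin_add_pi]; ring
  have hper : Function.Periodic w Real.pi := by
    intro θ
    simp only [w, hAp, hBp, hA'p, hB'p]
    congr 1
    · linear_combination (A θ * B' θ - B θ * A' θ) * hεsq
    · linear_combination (A θ ^ 2 + B θ ^ 2) * hεsq
  have hε0 : ε ≠ 0 := by rintro h; rw [h] at hεsq; simp at hεsq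
  -- choice of the base point
  have hδ : ∃ δ : ℝ, 0 < δ ∧ δ < Real.pi ∧ ∀ z ∈ Z, z < Real.pi - δ := by
    have h1 : ∀ᶠ δ in 𝓝[>] (0 : ℝ), ∀ z ∈ Z, z < Real.pi - δ := by
      rw [Filter.eventually_all_finset]
      intro z hz
      have := (hZr z hz).2
      have : ∀ᶠ δ in 𝓝 (0 : ℝ), δ < Real.pi - z := gt_mem_nhds (by linarith)
      filter_upwards [nhdsWithin_le_nhds this] with δ h
      linarith
    have h2 : ∀ᶠ δ in 𝓝[>] (0 : ℝ), δ < Real.pi := nhdsWithin_le_nhds (gt_mem_nhds Real.pi_pos)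
    obtain ⟨δ, h, h', h''⟩ := (h1.and (h2.and self_mem_nhdsWithin)).exists
    exact ⟨δ, h'', h', h⟩
  obtain ⟨δ, hδ0, hδ1, hδZ⟩ := hδ
  have hA0 : ∀ θ, A θ = 0 ↔ EV F (pt 1 θ) = 0 := by
    intro θ; rw [hAφ, mul_eq_zero, or_iff_right hdR.ne']
  have main := wind_jump A B A' B' (-δ) (-δ + Real.pi) (by linarith [Real.pi_pos]) hdA hdB hcA' hcB'
    hne Z (by
      intro t ht
      by_cases h0 : 0 ≤ t
      · rw [hA0, hZ t h0 (by linarith [ht.2])]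
      · push Not at h0
        have h1 : A t = 0 ↔ A (t + Real.pi) = 0 := by
          rw [hAp, mul_eq_zero, or_iff_right (neg_ne_zero.2 hε0)]
        rw [h1, hA0, hZ (t + Real.pi) (by linarith [ht.1]) (by linarith)]
        constructor
        · intro h; have := hδZ _ h; linarith [ht.1]
        · intro h; linarith [(hZr _ h).1])
    (fun z hz => ⟨by linarith [(hZr z hz).1], by linarith [hδZ z hz]⟩)
    (by
      intro z hz
      have hz0 : A z = 0 := by rw [hA0, hZ z (hZr z hz).1 (hZr z hz).2]; exact hz
      have hB : B z ≠ 0 := by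
        intro h; apply hne z; simp [hz0, h]
      rw [hA'B]
      have : 0 < B z ^ 2 := by positivity
      nlinarith)
  have hq : B (-δ + Real.pi) / A (-δ + Real.pi) = B (-δ) / A (-δ) := by
    rw [hAp, hBp, mul_div_mul_left _ _ (neg_ne_zero.2 hε0)]
  rw [hq, sub_self, zero_sub, hcard] at main
  have hw : ∫ θ in (-Real.pi)..Real.pi, w θ = 2 * -(Real.pi * (realDegreeOf F : ℝ)) := by
    have h1 : ∫ θ in (-Real.pi)..0, w θ = -(Real.pi * (realDegreeOf F : ℝ)) := by
      rw [← main]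
      have := hper.intervalIntegral_add_eq (-Real.pi) (-δ)
      rw [neg_add_cancel] at this
      exact this
    have h2 : ∫ θ in (0 : ℝ)..Real.pi, w θ = -(Real.pi * (realDegreeOf F : ℝ)) := by
      rw [← main]
      have := hper.intervalIntegral_add_eq 0 (-δ)
      rw [zero_add] at this
      exact this
    rw [← intervalIntegral.integral_add_adjacent_intervals (hwc.intervalIntegrable _ 0)
      (hwc.intervalIntegrable _ _), h1, h2]; ring
  calc _ = ∫ θ in (-Real.pi)..Real.pi, (1 + w θ) := by
        congr 1; funext θ; exact hintegral θ
    _ = _ := by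
        rw [intervalIntegral.integral_add (by simp) (hwc.intervalIntegrable _ _), hw]
        simp; ring
end

open MvPolynomial Filter Topology

/-- a `C¹` regularisation of `1/s` -/
noncomputable def hC (c s : ℝ) : ℝ := if s ≤ c then (2 * c - s) / c ^ 2 else 1 / s

/-- its derivative -/
noncomputable def hC' (c s : ℝ) : ℝ := if s ≤ c then -1 / c ^ 2 else -1 / s ^ 2

/-- the associated bump -/
noncomputable def rho (c s : ℝ) : ℝ := 4 * max (c - s) 0 / c ^ 2

lemma hC_of_ge {c s : ℝ} (hc : 0 < c) (h : c ≤ s) : hC c s = 1 / s := by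
  unfold hC
  split_ifs with h1
  · have : s = c := le_antisymm h1 h
    subst this
    field_simp; ring
  · rfl

lemma rho_of_ge {c s : ℝ} (h : c ≤ s) : rho c s = 0 := by
  unfold rho; rw [max_eq_right (by linarith)]; simp

lemma rho_eq {c s : ℝ} (hc : 0 < c) : rho c s = 2 * hC c s + 2 * hC' c s * s := by
  unfold rho hC hC'
  split_ifs with h
  · rw [max_eq_left (by linarith)]; field_simp; ring
  · push Not at h
    have : s ≠ 0 := by linarith
    rw [max_eq_right (by linarith)]; field_simp; ring

lemma hC_deriv {c : ℝ} (hc : 0 < c) (s : ℝ) : HasDerivAt (hC c) (hC' c s) s := by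
  have h1 : ∀ s, HasDerivAt (fun s => (2 * c - s) / c ^ 2) (-1 / c ^ 2) s := fun s => by
    simpa using ((hasDerivAt_id s).const_sub (2 * c)).div_const (c ^ 2)
  have h2 : ∀ s, s ≠ 0 → HasDerivAt (fun s : ℝ => 1 / s) (-1 / s ^ 2) s := fun s hs => by
    have := hasDerivAt_inv hs
    simp only [one_div]
    refine this.congr_deriv ?_
    rw [neg_div, one_div]
  rcases lt_trichotomy s c with h | h | h
  · have : hC' c s = -1 / c ^ 2 := by simp [hC', h.le]
    rw [this]
    refine (h1 s).congr_of_eventuallyEq ?_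
    filter_upwards [gt_mem_nhds h] with t ht
    simp [hC, ht.le]
  · subst h
    have e : hC' s s = -1 / s ^ 2 := by simp [hC']
    rw [e, ← hasDerivWithinAt_univ, ← Set.Iic_union_Ici (a := s)]
    apply HasDerivWithinAt.union
    · refine (h1 s).hasDerivWithinAt.congr ?_ ?_
      · intro t ht; simp only [Set.mem_Iic] at ht; simp [hC, ht]
      · simp [hC]
    · refine (h2 s hc.ne').hasDerivWithinAt.congr ?_ ?_
      · intro t ht; exact hC_of_ge hc ht
      · exact hC_of_ge hc le_rfl
  · have : hC' c s = -1 / s ^ 2 := by simp [hC', h]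
    rw [this]
    refine (h2 s (by linarith)).congr_of_eventuallyEq ?_
    filter_upwards [lt_mem_nhds h] with t ht
    exact hC_of_ge hc ht.le

lemma hC_cont {c : ℝ} (hc : 0 < c) : Continuous (hC c) :=
  continuous_iff_continuousAt.2 fun s => (hC_deriv hc s).continuousAt

lemma rho_cont (c : ℝ) : Continuous (rho c) := by unfold rho; fun_prop

/-- total derivative of a function of two variables with given partials -/
def HP (F : ℝ × ℝ → ℝ) (α β : ℝ) (x : ℝ × ℝ) : Prop :=
  HasFDerivAt F (α • ContinuousLinearMap.fst ℝ ℝ ℝ + β • ContinuousLinearMap.snd ℝ ℝ ℝ) x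

lemma HP.mul {F G : ℝ × ℝ → ℝ} {α β α' β' : ℝ} {x : ℝ × ℝ} (h : HP F α β x) (h' : HP G α' β' x) :
    HP (fun x => F x * G x) (α * G x + F x * α') (β * G x + F x * β') x := by
  refine (HasFDerivAt.mul h h').congr_fderiv ?_
  ext <;> simp <;> ring

lemma HP.add {F G : ℝ × ℝ → ℝ} {α β α' β' : ℝ} {x : ℝ × ℝ} (h : HP F α β x) (h' : HP G α' β' x) :
    HP (fun x => F x + G x) (α + α') (β + β') x := by
  refine (HasFDerivAt.add h h').congr_fderiv ?_
  ext <;> simp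

lemma HP.sub {F G : ℝ × ℝ → ℝ} {α β α' β' : ℝ} {x : ℝ × ℝ} (h : HP F α β x) (h' : HP G α' β' x) :
    HP (fun x => F x - G x) (α - α') (β - β') x := by
  refine (HasFDerivAt.sub h h').congr_fderiv ?_
  ext <;> simp

lemma HP.neg {F : ℝ × ℝ → ℝ} {α β : ℝ} {x : ℝ × ℝ} (h : HP F α β x) :
    HP (fun x => - F x) (-α) (-β) x := by
  refine (HasFDerivAt.fun_neg h).congr_fderiv ?_
  ext <;> simp

lemma HP.comp {F : ℝ × ℝ → ℝ} {α β : ℝ} {x : ℝ × ℝ} {h : ℝ → ℝ} {h' : ℝ} (hh : HasDerivAt h h' (F x))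
    (hF : HP F α β x) : HP (fun x => h (F x)) (h' * α) (h' * β) x := by
  refine (hh.comp_hasFDerivAt x hF).congr_fderiv ?_
  ext <;> simp

lemma HP.fst (x : ℝ × ℝ) : HP (fun x => x.1) 1 0 x := by
  refine (hasFDerivAt_fst).congr_fderiv ?_
  ext <;> simp

lemma HP.snd (x : ℝ × ℝ) : HP (fun x => x.2) 0 1 x := by
  refine (hasFDerivAt_snd).congr_fderiv ?_
  ext <;> simp

lemma HP.congr {F : ℝ × ℝ → ℝ} {α β α' β' : ℝ} {x : ℝ × ℝ} (h : HP F α β x) (h1 : α = α')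
    (h2 : β = β') : HP F α' β' x := by subst h1 h2; exact h

lemma HP_cos (x : ℝ × ℝ) : HP (fun x => Real.cos x.2) 0 (-Real.sin x.2) x :=
  (HP.comp (Real.hasDerivAt_cos x.2) (HP.snd x)).congr (by simp) (by simp)

lemma HP_sin (x : ℝ × ℝ) : HP (fun x => Real.sin x.2) 0 (Real.cos x.2) x :=
  (HP.comp (Real.hasDerivAt_sin x.2) (HP.snd x)).congr (by simp) (by simp)

lemma HP_EV (P : MvPolynomial (Fin 2) ℝ) (x : ℝ × ℝ) :
    HP (fun x => EV P (pt x.1 x.2)) (DR P x.1 x.2) (DT P x.1 x.2) x := by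
  have h1 : HP (fun x => x.1 * Real.cos x.2) (Real.cos x.2) (x.1 * -Real.sin x.2) x :=
    ((HP.fst x).mul (HP_cos x)).congr (by simp) (by simp)
  have h2 : HP (fun x => x.1 * Real.sin x.2) (Real.sin x.2) (x.1 * Real.cos x.2) x :=
    ((HP.fst x).mul (HP_sin x)).congr (by simp) (by simp)
  have := (EV_strict P (pt x.1 x.2)).hasFDerivAt.comp x (HasFDerivAt.prodMk h1 h2)
  refine HasFDerivAt.congr_fderiv this ?_
  ext <;> simp [DR, DT]

/-- mixed second derivative -/
noncomputable def DRT (P : MvPolynomial (Fin 2) ℝ) (R θ : ℝ) : ℝ :=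
  DT (pderiv 0 P) R θ * Real.cos θ + EV (pderiv 0 P) (pt R θ) * -Real.sin θ +
  (DT (pderiv 1 P) R θ * Real.sin θ + EV (pderiv 1 P) (pt R θ) * Real.cos θ)

lemma HP_DR (P : MvPolynomial (Fin 2) ℝ) (x : ℝ × ℝ) :
    ∃ α, HP (fun x => DR P x.1 x.2) α (DRT P x.1 x.2) x :=
  ⟨_, ((HP_EV (pderiv 0 P) x).mul (HP_cos x)).add ((HP_EV (pderiv 1 P) x).mul (HP_sin x))⟩

lemma HP_DT (P : MvPolynomial (Fin 2) ℝ) (x : ℝ × ℝ) :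
    ∃ β, HP (fun x => DT P x.1 x.2) (DRT P x.1 x.2) β x := by
  refine ⟨_, (((HP_EV (pderiv 0 P) x).mul ((HP.fst x).mul (HP_sin x).neg)).add
    ((HP_EV (pderiv 1 P) x).mul ((HP.fst x).mul (HP_cos x)))).congr ?_ rfl⟩
  simp only [DRT, DR, DT, pderiv_swap]; ring

/-- Jacobian determinant -/
noncomputable def JJ (P Q : MvPolynomial (Fin 2) ℝ) (v : ℝ × ℝ) : ℝ :=
  EV (pderiv 0 P) v * EV (pderiv 1 Q) v - EV (pderiv 1 P) v * EV (pderiv 0 Q) v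

/-- squared norm -/
noncomputable def NN (P Q : MvPolynomial (Fin 2) ℝ) (v : ℝ × ℝ) : ℝ := EV P v ^ 2 + EV Q v ^ 2

@[fun_prop]
lemma NN_cont (P Q : MvPolynomial (Fin 2) ℝ) : Continuous (NN P Q) := by unfold NN; fun_prop

@[fun_prop]
lemma JJ_cont (P Q : MvPolynomial (Fin 2) ℝ) : Continuous (JJ P Q) := by unfold JJ; fun_prop

lemma green (P Q : MvPolynomial (Fin 2) ℝ) {c : ℝ} (hc : 0 < c) {R : ℝ} (hR : 0 < R) :
    ∫ x in Set.Icc ((0 : ℝ), -Real.pi) (R, Real.pi),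
      x.1 * (rho c (NN P Q (pt x.1 x.2)) * JJ P Q (pt x.1 x.2)) =
    ∫ θ in (-Real.pi)..Real.pi, hC c (NN P Q (pt R θ)) *
      (EV P (pt R θ) * DT Q R θ - EV Q (pt R θ) * DT P R θ) := by
  have hNc : Continuous fun x : ℝ × ℝ => NN P Q (pt x.1 x.2) := (NN_cont P Q).comp pt_cont
  have hJc : Continuous fun x : ℝ × ℝ => JJ P Q (pt x.1 x.2) := (JJ_cont P Q).comp pt_cont
  have hhc : Continuous fun x : ℝ × ℝ => hC c (NN P Q (pt x.1 x.2)) := (hC_cont hc).comp hNc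
  have hrc : Continuous fun x : ℝ × ℝ => rho c (NN P Q (pt x.1 x.2)) := (rho_cont c).comp hNc
  let f : ℝ × ℝ → ℝ := fun x => hC c (NN P Q (pt x.1 x.2)) *
    (EV P (pt x.1 x.2) * DT Q x.1 x.2 - EV Q (pt x.1 x.2) * DT P x.1 x.2)
  let g : ℝ × ℝ → ℝ := fun x => -(hC c (NN P Q (pt x.1 x.2)) *
    (EV P (pt x.1 x.2) * DR Q x.1 x.2 - EV Q (pt x.1 x.2) * DR P x.1 x.2))
  have hfc : Continuous f := by fun_prop
  have hgc : Continuous g := by fun_prop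
  have hex : ∀ x, ∃ α β α' β', HP f α β x ∧ HP g α' β' x ∧ α + β' =
      x.1 * (rho c (NN P Q (pt x.1 x.2)) * JJ P Q (pt x.1 x.2)) := by
    intro x
    obtain ⟨a1, h1⟩ := HP_DR P x
    obtain ⟨a2, h2⟩ := HP_DR Q x
    obtain ⟨b1, k1⟩ := HP_DT P x
    obtain ⟨b2, k2⟩ := HP_DT Q x
    have hp := HP_EV P x
    have hq := HP_EV Q x
    have hN : HP (fun x => NN P Q (pt x.1 x.2))
        (2 * EV P (pt x.1 x.2) * DR P x.1 x.2 + 2 * EV Q (pt x.1 x.2) * DR Q x.1 x.2)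
        (2 * EV P (pt x.1 x.2) * DT P x.1 x.2 + 2 * EV Q (pt x.1 x.2) * DT Q x.1 x.2) x := by
      have := ((hp.mul hp).add (hq.mul hq)).congr (α' := 2 * EV P (pt x.1 x.2) * DR P x.1 x.2 + 2 * EV Q (pt x.1 x.2) * DR Q x.1 x.2) (β' := 2 * EV P (pt x.1 x.2) * DT P x.1 x.2 + 2 * EV Q (pt x.1 x.2) * DT Q x.1 x.2) (by ring) (by ring)
      have e : (fun x : ℝ × ℝ => NN P Q (pt x.1 x.2)) = fun x => EV P (pt x.1 x.2) * EV P (pt x.1 x.2)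
          + EV Q (pt x.1 x.2) * EV Q (pt x.1 x.2) := by
        funext x; simp only [NN]; ring
      rw [e]; exact this
    have hH := HP.comp (F := fun x => NN P Q (pt x.1 x.2)) (hC_deriv hc (NN P Q (pt x.1 x.2))) hN
    refine ⟨_, _, _, _, hH.mul ((hp.mul k2).sub (hq.mul k1)),
      (hH.mul ((hp.mul h2).sub (hq.mul h1))).neg, ?_⟩
    have hj : DR P x.1 x.2 * DT Q x.1 x.2 - DR Q x.1 x.2 * DT P x.1 x.2 =
        x.1 * JJ P Q (pt x.1 x.2) := by
      simp only [DR, DT, JJ]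
      linear_combination x.1 * (EV (pderiv 0 P) (pt x.1 x.2) * EV (pderiv 1 Q) (pt x.1 x.2) -
        EV (pderiv 1 P) (pt x.1 x.2) * EV (pderiv 0 Q) (pt x.1 x.2)) * Real.cos_sq_add_sin_sq x.2
    rw [rho_eq hc]
    have hNN : NN P Q (pt x.1 x.2) = EV P (pt x.1 x.2) ^ 2 + EV Q (pt x.1 x.2) ^ 2 := rfl
    generalize hC c (NN P Q (pt x.1 x.2)) = H
    generalize hC' c (NN P Q (pt x.1 x.2)) = K
    rw [hNN]
    linear_combination (2 * H + 2 * K * (EV P (pt x.1 x.2) ^ 2 + EV Q (pt x.1 x.2) ^ 2)) * hj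
  choose α β α' β' h1 h2 h3 using hex
  have hdiv := MeasureTheory.integral_divergence_prod_Icc_of_hasFDerivAt_of_le f g
    (fun x => α x • ContinuousLinearMap.fst ℝ ℝ ℝ + β x • ContinuousLinearMap.snd ℝ ℝ ℝ)
    (fun x => α' x • ContinuousLinearMap.fst ℝ ℝ ℝ + β' x • ContinuousLinearMap.snd ℝ ℝ ℝ)
    (0, -Real.pi) (R, Real.pi) ⟨hR.le, by simp; linarith [Real.pi_pos]⟩ hfc.continuousOn hgc.continuousOn
    (fun x _ => h1 x) (fun x _ => h2 x)
  have e : (fun x : ℝ × ℝ => (α x • ContinuousLinearMap.fst ℝ ℝ ℝ + β x • ContinuousLinearMap.snd ℝ ℝ ℝ) (1, 0)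
      + (α' x • ContinuousLinearMap.fst ℝ ℝ ℝ + β' x • ContinuousLinearMap.snd ℝ ℝ ℝ) (0, 1)) =
      fun x => x.1 * (rho c (NN P Q (pt x.1 x.2)) * JJ P Q (pt x.1 x.2)) := by
    funext x; rw [← h3 x]; simp
  rw [e] at hdiv
  rw [hdiv (Continuous.integrableOn_Icc (by fun_prop))]
  have e1 : ∀ r, g (r, Real.pi) = g (r, -Real.pi) := by
    intro r; simp [g, pt, DR]
  have e2 : ∀ θ, f (0, θ) = 0 := by
    intro θ; simp [f, DT]
  simp only [e1, e2]
  simp [f]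

lemma green_plane (P Q : MvPolynomial (Fin 2) ℝ) {c : ℝ} (hc : 0 < c) {R : ℝ} (hR : 0 < R)
    (hge : ∀ r θ, R ≤ r → c ≤ NN P Q (pt r θ)) :
    ∫ v : ℝ × ℝ, rho c (NN P Q v) * JJ P Q v =
    ∫ θ in (-Real.pi)..Real.pi, hC c (NN P Q (pt R θ)) *
      (EV P (pt R θ) * DT Q R θ - EV Q (pt R θ) * DT P R θ) := by
  rw [← green P Q hc hR, ← integral_comp_polarCoord_symm]
  have e : ∀ p : ℝ × ℝ, polarCoord.symm p = pt p.1 p.2 := fun p => rfl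
  simp only [e, smul_eq_mul]
  have h1 : Set.Icc ((0 : ℝ), -Real.pi) (R, Real.pi) =ᵐ[MeasureTheory.volume]
      (Set.Ioo 0 R ×ˢ Set.Ioo (-Real.pi) Real.pi : Set (ℝ × ℝ)) := by
    rw [← Set.Icc_prod_Icc]
    exact (MeasureTheory.Measure.set_prod_ae_eq MeasureTheory.Ioo_ae_eq_Icc
      MeasureTheory.Ioo_ae_eq_Icc).symm
  rw [MeasureTheory.setIntegral_congr_set h1]
  apply MeasureTheory.setIntegral_eq_of_subset_of_forall_sdiff_eq_zero
  · exact polarCoord.open_target.measurableSet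
  · rintro ⟨r, θ⟩ ⟨h, h'⟩
    exact ⟨h.1, h'⟩
  · rintro ⟨r, θ⟩ ⟨⟨h1, h2⟩, h3⟩
    have : R ≤ r := by
      by_contra h
      push Not at h
      exact h3 ⟨⟨h1, h⟩, h2⟩
    simp only
    rw [rho_of_ge (hge r θ this)]; simp

lemma bump_integral {c : ℝ} (hc : 0 < c) :
    ∫ v : ℝ × ℝ, rho c (v.1 ^ 2 + v.2 ^ 2) = 2 * Real.pi := by
  have hN : ∀ v, NN (X 0) (X 1) v = v.1 ^ 2 + v.2 ^ 2 := fun v => by simp [NN, EV_X0, EV_X1]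
  have hJ : ∀ v, JJ (X 0) (X 1) v = 1 := fun v => by
    simp [JJ, EV_one, EV_zero]
  have hpt : ∀ r θ, (pt r θ).1 ^ 2 + (pt r θ).2 ^ 2 = r ^ 2 := by
    intro r θ; simp only [pt]; linear_combination r ^ 2 * Real.cos_sq_add_sin_sq θ
  have h := green_plane (X 0) (X 1) hc (R := c + 1) (by linarith) (by
    intro r θ hr; rw [hN, hpt]; nlinarith)
  simp only [hN, hJ, mul_one] at h
  rw [h]
  have : ∀ θ, hC c ((pt (c + 1) θ).1 ^ 2 + (pt (c + 1) θ).2 ^ 2) *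
      (EV (X 0) (pt (c + 1) θ) * DT (X 1) (c + 1) θ - EV (X 1) (pt (c + 1) θ) * DT (X 0) (c + 1) θ)
      = 1 := by
    intro θ
    rw [hpt, hC_of_ge hc (by nlinarith)]
    have : (c + 1) ≠ 0 := by linarith
    simp [DT, EV_X0, EV_X1, EV_one, EV_zero]
    simp only [pt]
    field_simp
    linear_combination Real.cos_sq_add_sin_sq θ
  simp only [this]
  simp; ring

open MvPolynomial Filter Topology

/-- the planar map -/
noncomputable def gg (P Q : MvPolynomial (Fin 2) ℝ) (v : ℝ × ℝ) : ℝ × ℝ := (EV P v, EV Q v)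

/-- its derivative -/
noncomputable def gD (P Q : MvPolynomial (Fin 2) ℝ) (v : ℝ × ℝ) : ℝ × ℝ →L[ℝ] ℝ × ℝ :=
  (EV (pderiv 0 P) v • ContinuousLinearMap.fst ℝ ℝ ℝ +
      EV (pderiv 1 P) v • ContinuousLinearMap.snd ℝ ℝ ℝ).prod
  (EV (pderiv 0 Q) v • ContinuousLinearMap.fst ℝ ℝ ℝ +
      EV (pderiv 1 Q) v • ContinuousLinearMap.snd ℝ ℝ ℝ)

lemma gg_strict (P Q : MvPolynomial (Fin 2) ℝ) (v : ℝ × ℝ) :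
    HasStrictFDerivAt (gg P Q) (gD P Q v) v := (EV_strict P v).prodMk (EV_strict Q v)

lemma gD_det (P Q : MvPolynomial (Fin 2) ℝ) (v : ℝ × ℝ) : (gD P Q v).det = JJ P Q v := by
  unfold gD JJ
  rw [← Matrix.toLin_finTwoProd_toContinuousLinearMap]
  simp only [LinearMap.det_toContinuousLinearMap, LinearMap.det_toLin, Matrix.det_fin_two_of]

lemma local_facts (P Q : MvPolynomial (Fin 2) ℝ) (z : ℝ × ℝ) (hz : JJ P Q z ≠ 0) :
    (∃ U : Set (ℝ × ℝ), IsOpen U ∧ z ∈ U ∧ Set.InjOn (gg P Q) U ∧ ∀ x ∈ U, 0 < JJ P Q z * JJ P Q x) ∧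
    ∀ V ∈ 𝓝 z, gg P Q '' V ∈ 𝓝 (gg P Q z) := by
  have hs := gg_strict P Q z
  rw [← gD_det] at hz
  rw [← ContinuousLinearMap.coe_toContinuousLinearEquivOfDetNeZero _ hz] at hs
  constructor
  · have hO : IsOpen {x | 0 < JJ P Q z * JJ P Q x} := isOpen_lt continuous_const (by fun_prop)
    refine ⟨(hs.toOpenPartialHomeomorph (gg P Q)).source ∩ {x | 0 < JJ P Q z * JJ P Q x},
      (hs.toOpenPartialHomeomorph (gg P Q)).open_source.inter hO, ⟨?_, ?_⟩, ?_, ?_⟩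
    · exact hs.mem_toOpenPartialHomeomorph_source
    · rw [gD_det] at hz
      exact mul_self_pos.2 hz
    · exact ((hs.toOpenPartialHomeomorph (gg P Q)).injOn).mono Set.inter_subset_left
    · exact fun x hx => hx.2
  · intro V hV
    rw [← hs.map_nhds_eq_of_equiv]
    exact Filter.image_mem_map hV

lemma NN_eq_zero {P Q : MvPolynomial (Fin 2) ℝ} {v : ℝ × ℝ} : NN P Q v = 0 ↔ gg P Q v = 0 := by
  unfold NN gg
  constructor
  · intro h
    have h1 : EV P v = 0 := by nlinarith [sq_nonneg (EV P v), sq_nonneg (EV Q v)]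
    have h2 : EV Q v = 0 := by nlinarith [sq_nonneg (EV P v), sq_nonneg (EV Q v)]
    rw [h1, h2]; rfl
  · intro h
    rw [Prod.mk_eq_zero] at h
    simp [h.1, h.2]

lemma NN_nonneg (P Q : MvPolynomial (Fin 2) ℝ) (v : ℝ × ℝ) : 0 ≤ NN P Q v := by
  unfold NN; positivity

lemma disc_compact (R : ℝ) : IsCompact {v : ℝ × ℝ | v.1 ^ 2 + v.2 ^ 2 ≤ R ^ 2} := by
  refine (isCompact_Icc (a := (-|R|, -|R|)) (b := (|R|, |R|))).of_isClosed_subset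
    (isClosed_le (by fun_prop) (by fun_prop)) ?_
  intro v hv
  simp only [Set.mem_ofPred_eq] at hv
  have h1 : |v.1| ≤ |R| := sq_le_sq.1 (by nlinarith [sq_nonneg v.2])
  have h2 : |v.2| ≤ |R| := sq_le_sq.1 (by nlinarith [sq_nonneg v.1])
  rw [abs_le] at h1 h2
  exact ⟨⟨h1.1, h2.1⟩, ⟨h1.2, h2.2⟩⟩

lemma degree_formula (P Q : MvPolynomial (Fin 2) ℝ) {R c0 : ℝ} (hc0 : 0 < c0)
    (hge : ∀ v : ℝ × ℝ, R ^ 2 ≤ v.1 ^ 2 + v.2 ^ 2 → c0 ≤ NN P Q v)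
    (hnd : ∀ v, NN P Q v = 0 → JJ P Q v ≠ 0) :
    ∃ K : Finset (ℝ × ℝ), (∀ v, v ∈ K ↔ NN P Q v = 0) ∧ ∃ c, 0 < c ∧ c ≤ c0 ∧
      ∫ v : ℝ × ℝ, rho c (NN P Q v) * JJ P Q v =
        2 * Real.pi * ∑ z ∈ K, (if 0 < JJ P Q z then (1 : ℝ) else -1) := by
  classical
  set D := {v : ℝ × ℝ | v.1 ^ 2 + v.2 ^ 2 ≤ R ^ 2} with hD
  have hDc : IsCompact D := disc_compact R
  have hDo : ∀ v, v ∉ D → c0 ≤ NN P Q v := by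
    intro v hv
    apply hge
    simp only [hD, Set.mem_ofPred_eq, not_le] at hv
    exact hv.le
  have hKc : IsCompact {v | NN P Q v = 0} := by
    refine hDc.of_isClosed_subset (isClosed_eq (by fun_prop) continuous_const) ?_
    intro v hv
    by_contra h
    have := hDo v h
    rw [Set.mem_ofPred_eq] at hv
    linarith
  have hloc : ∀ z, NN P Q z = 0 → ∃ U : Set (ℝ × ℝ), IsOpen U ∧ z ∈ U ∧ Set.InjOn (gg P Q) U ∧
      ∀ x ∈ U, 0 < JJ P Q z * JJ P Q x := fun z hz => (local_facts P Q z (hnd z hz)).1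
  choose! U hUo hUz hUi hUJ using hloc
  have hKfin : {v | NN P Q v = 0}.Finite := by
    obtain ⟨t, ht, hsub⟩ := hKc.elim_nhds_subcover U (fun z hz => (hUo z hz).mem_nhds (hUz z hz))
    refine t.finite_toSet.subset ?_
    intro v hv
    obtain ⟨z, hz, hvz⟩ := Set.mem_iUnion₂.1 (hsub hv)
    have : v = z := hUi z (ht z hz) hvz (hUz z (ht z hz)) (by
      rw [NN_eq_zero.1 hv, NN_eq_zero.1 (ht z hz)])
    rw [this]; exact hz
  obtain ⟨W, hW, hWd⟩ := hKfin.t2_separation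
  let V : ℝ × ℝ → Set (ℝ × ℝ) := fun z => U z ∩ W z
  let K := hKfin.toFinset
  have hK : ∀ v, v ∈ K ↔ NN P Q v = 0 := by intro v; simp [K]
  have hVo : ∀ z ∈ K, IsOpen (V z) := fun z hz => (hUo z ((hK z).1 hz)).inter (hW z).2
  have hVz : ∀ z ∈ K, z ∈ V z := fun z hz => ⟨hUz z ((hK z).1 hz), (hW z).1⟩
  -- first constant
  have hE1 : ∀ᶠ c in 𝓝[>] (0 : ℝ), ∀ z ∈ K, ∀ w : ℝ × ℝ, w.1 ^ 2 + w.2 ^ 2 < c → w ∈ gg P Q '' V z := by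
    rw [Filter.eventually_all_finset]
    intro z hz
    have h1 := (local_facts P Q z (hnd z ((hK z).1 hz))).2 (V z) ((hVo z hz).mem_nhds (hVz z hz))
    rw [NN_eq_zero.1 ((hK z).1 hz), Metric.mem_nhds_iff] at h1
    obtain ⟨ε, hε, hsub⟩ := h1
    have : ∀ᶠ c in 𝓝 (0 : ℝ), c < ε ^ 2 := gt_mem_nhds (by positivity)
    filter_upwards [nhdsWithin_le_nhds this] with c hc w hw
    apply hsub
    rw [mem_ball_zero_iff, Prod.norm_def, max_lt_iff, Real.norm_eq_abs, Real.norm_eq_abs]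
    constructor
    · apply abs_lt_of_sq_lt_sq _ hε.le; nlinarith [sq_nonneg w.2]
    · apply abs_lt_of_sq_lt_sq _ hε.le; nlinarith [sq_nonneg w.1]
  have hE2 : ∀ᶠ c in 𝓝[>] (0 : ℝ), ∀ v, NN P Q v < c → v ∈ ⋃ z ∈ K, V z := by
    have hO : IsOpen (⋃ z ∈ K, V z) := isOpen_biUnion hVo
    have hcomp : IsCompact (D \ ⋃ z ∈ K, V z) := hDc.diff hO
    have hex : ∃ m > 0, ∀ v ∈ D \ ⋃ z ∈ K, V z, m ≤ NN P Q v := by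
      rcases (D \ ⋃ z ∈ K, V z).eq_empty_or_nonempty with h | h
      · exact ⟨1, one_pos, by rw [h]; simp⟩
      · obtain ⟨v0, hv0, hmin⟩ := hcomp.exists_isMinOn h (NN_cont P Q).continuousOn
        refine ⟨NN P Q v0, ?_, fun v hv => hmin hv⟩
        refine lt_of_le_of_ne (NN_nonneg _ _ _) ?_
        intro h0
        have hk := (hK v0).2 h0.symm
        exact hv0.2 (Set.mem_iUnion₂.2 ⟨v0, hk, hVz v0 hk⟩)
    obtain ⟨m, hm, hmle⟩ := hex
    have h1 : ∀ᶠ c in 𝓝 (0 : ℝ), c < m := gt_mem_nhds hm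
    have h2 : ∀ᶠ c in 𝓝 (0 : ℝ), c < c0 := gt_mem_nhds hc0
    filter_upwards [nhdsWithin_le_nhds h1, nhdsWithin_le_nhds h2] with c hc1 hc2 v hv
    by_contra hn
    by_cases hvD : v ∈ D
    · have := hmle v ⟨hvD, hn⟩; linarith
    · have := hDo v hvD; linarith
  have hE3 : ∀ᶠ c in 𝓝[>] (0 : ℝ), c < c0 := nhdsWithin_le_nhds (gt_mem_nhds hc0)
  obtain ⟨c, h1, h2, h3, hcpos⟩ := (hE1.and (hE2.and (hE3.and self_mem_nhdsWithin))).exists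
  have hcpos : 0 < c := hcpos
  refine ⟨K, hK, c, hcpos, h3.le, ?_⟩
  set φ : ℝ × ℝ → ℝ := fun v => rho c (NN P Q v) * JJ P Q v with hφ
  have hφc : Continuous φ := ((rho_cont c).comp (NN_cont P Q)).mul (JJ_cont P Q)
  have hφi : MeasureTheory.Integrable φ := by
    apply hφc.integrable_of_hasCompactSupport
    refine HasCompactSupport.intro hDc ?_
    intro v hv
    simp only [hφ]
    rw [rho_of_ge (h3.le.trans (hDo v hv)), zero_mul]
  have e1 : ∫ v, φ v = ∫ v in ⋃ z ∈ K, V z, φ v := by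
    rw [MeasureTheory.setIntegral_eq_integral_of_forall_compl_eq_zero]
    intro v hv
    simp only [hφ]
    rw [rho_of_ge, zero_mul]
    by_contra h
    push Not at h
    exact hv (h2 v h)
  rw [e1, MeasureTheory.integral_biUnion_finset K (fun z hz => (hVo z hz).measurableSet) ?_
    (fun z hz => hφi.integrableOn), Finset.mul_sum]
  · apply Finset.sum_congr rfl
    intro z hz
    have hz0 := (hK z).1 hz
    have hcv := MeasureTheory.integral_image_eq_integral_abs_det_fderiv_smul MeasureTheory.volume
      (hVo z hz).measurableSet (fun x _ => (gg_strict P Q x).hasFDerivAt.hasFDerivWithinAt)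
      ((hUi z hz0).mono Set.inter_subset_left) (fun w : ℝ × ℝ => rho c (w.1 ^ 2 + w.2 ^ 2))
    have hfull : ∫ w in gg P Q '' V z, rho c (w.1 ^ 2 + w.2 ^ 2) = 2 * Real.pi := by
      rw [← bump_integral hcpos, MeasureTheory.setIntegral_eq_integral_of_forall_compl_eq_zero]
      intro w hw
      apply rho_of_ge
      by_contra h
      push Not at h
      exact hw (h1 z hz w h)
    rw [hfull] at hcv
    have hsign : ∫ v in V z, φ v = (if 0 < JJ P Q z then (1 : ℝ) else -1) *
        ∫ x in V z, |(gD P Q x).det| • rho c ((gg P Q x).1 ^ 2 + (gg P Q x).2 ^ 2) := by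
      rw [← MeasureTheory.integral_const_mul]
      apply MeasureTheory.setIntegral_congr_fun (hVo z hz).measurableSet
      intro x hx
      have hp := hUJ z hz0 x hx.1
      simp only [hφ, gD_det, smul_eq_mul, gg]
      change rho c (NN P Q x) * _ = _ * (_ * rho c (NN P Q x))
      split_ifs with h
      · have : 0 < JJ P Q x := by
          by_contra hh; push Not at hh; nlinarith
        rw [abs_of_pos this]; ring
      · have h' : JJ P Q z < 0 := lt_of_le_of_ne (not_lt.1 h) (hnd z hz0)
        have : JJ P Q x < 0 := by
          by_contra hh; push Not at hh; nlinarith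
        rw [abs_of_neg this]; ring
    rw [hsign, ← hcv]; ring
  · intro x hx y hy hxy
    have := hWd ((hK x).1 hx) ((hK y).1 hy) hxy
    exact this.mono Set.inter_subset_right Set.inter_subset_right

open MvPolynomial Filter Topology

lemma EV_sum {ι : Type*} (s : Finset ι) (g : ι → MvPolynomial (Fin 2) ℝ) (v : ℝ × ℝ) :
    EV (∑ k ∈ s, g k) v = ∑ k ∈ s, EV (g k) v := by simp [EV, evalP]

/-- rescaled gradient components -/
noncomputable def GT (f : MvPolynomial (Fin 2) ℝ) (d : ℕ) (i : Fin 2) (T : ℝ) (θ : ℝ) : ℝ :=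
  ∑ k ∈ Finset.range (d + 1), T ^ (d - k) * EV (pderiv i (homogeneousComponent k f)) (pt 1 θ)

/-- their angular derivatives -/
noncomputable def GD (f : MvPolynomial (Fin 2) ℝ) (d : ℕ) (i : Fin 2) (T : ℝ) (θ : ℝ) : ℝ :=
  ∑ k ∈ Finset.range (d + 1), T ^ (d - k) * DT (pderiv i (homogeneousComponent k f)) 1 θ

@[fun_prop]
lemma GT_cont (f : MvPolynomial (Fin 2) ℝ) (d : ℕ) (i : Fin 2) :
    Continuous (fun p : ℝ × ℝ => GT f d i p.1 p.2) := by
  unfold GT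
  refine continuous_finsetSum _ fun k _ => (continuous_fst.pow _).mul ?_
  exact (EV_pt_cont1 _ 1).comp continuous_snd

@[fun_prop]
lemma GD_cont (f : MvPolynomial (Fin 2) ℝ) (d : ℕ) (i : Fin 2) :
    Continuous (fun p : ℝ × ℝ => GD f d i p.1 p.2) := by
  unfold GD
  refine continuous_finsetSum _ fun k _ => (continuous_fst.pow _).mul ?_
  exact (DT_cont1 _ 1).comp continuous_snd

lemma GT_deriv (f : MvPolynomial (Fin 2) ℝ) (d : ℕ) (i : Fin 2) (T θ : ℝ) :
    HasDerivAt (fun s => GT f d i T s) (GD f d i T θ) θ := by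
  unfold GT GD
  exact HasDerivAt.fun_sum fun k _ => (hasDerivAt_EV_pt _ 1 θ).const_mul _

lemma sum_zero_pow (d : ℕ) (a : ℕ → ℝ) :
    ∑ k ∈ Finset.range (d + 1), (0 : ℝ) ^ (d - k) * a k = a d := by
  rw [Finset.sum_range_succ, Finset.sum_eq_zero]
  · simp
  · intro k hk
    have := Finset.mem_range.1 hk
    rw [zero_pow (by omega), zero_mul]

lemma GT_zero (f : MvPolynomial (Fin 2) ℝ) (d : ℕ) (i : Fin 2) (θ : ℝ) :
    GT f d i 0 θ = EV (pderiv i (homogeneousComponent d f)) (pt 1 θ) :=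
  sum_zero_pow d fun k => EV (pderiv i (homogeneousComponent k f)) (pt 1 θ)

lemma GD_zero (f : MvPolynomial (Fin 2) ℝ) (d : ℕ) (i : Fin 2) (θ : ℝ) :
    GD f d i 0 θ = DT (pderiv i (homogeneousComponent d f)) 1 θ :=
  sum_zero_pow d fun k => DT (pderiv i (homogeneousComponent k f)) 1 θ

lemma GT_scale (f : MvPolynomial (Fin 2) ℝ) {d : ℕ} (hd : f.totalDegree = d) (hd1 : 1 ≤ d)
    (i : Fin 2) {R : ℝ} (hR : 0 < R) (θ : ℝ) :
    GT f d i R⁻¹ θ = (R⁻¹) ^ (d - 1) * EV (pderiv i f) (pt R θ) := by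
  have h1 : EV (pderiv i f) (pt R θ) = ∑ k ∈ Finset.range (d + 1),
      EV (pderiv i (homogeneousComponent k f)) (pt R θ) := by
    rw [← EV_sum, ← map_sum, ← hd, sum_homogeneousComponent]
  rw [h1, GT, Finset.mul_sum]
  refine Finset.sum_congr rfl fun k hk => ?_
  have hk' := Finset.mem_range.1 hk
  have hp : pt R θ = (R * (pt 1 θ).1, R * (pt 1 θ).2) := by simp [pt]
  rcases Nat.eq_zero_or_pos k with h0 | h0
  · subst h0
    simp [EV_zero]
  · have hh : (pderiv i (homogeneousComponent k f)).IsHomogeneous (k - 1) :=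
      (homogeneousComponent_isHomogeneous k f).pderiv
    rw [hp, EV_hom hh, ← mul_assoc]
    congr 1
    obtain ⟨m, rfl⟩ : ∃ m, d = m + k := ⟨d - k, by omega⟩
    have : m + k - 1 = m + (k - 1) := by omega
    rw [this, pow_add, Nat.add_sub_cancel, mul_assoc, ← mul_pow, inv_mul_cancel₀ hR.ne', one_pow,
      mul_one]

lemma GD_scale (f : MvPolynomial (Fin 2) ℝ) {d : ℕ} (hd : f.totalDegree = d) (hd1 : 1 ≤ d)
    (i : Fin 2) {R : ℝ} (hR : 0 < R) (θ : ℝ) :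
    GD f d i R⁻¹ θ = (R⁻¹) ^ (d - 1) * DT (pderiv i f) R θ := by
  have h1 := GT_deriv f d i R⁻¹ θ
  have h2 := (hasDerivAt_EV_pt (pderiv i f) R θ).const_mul ((R⁻¹) ^ (d - 1))
  have : (fun s => GT f d i R⁻¹ s) = fun s => (R⁻¹) ^ (d - 1) * EV (pderiv i f) (pt R s) :=
    funext fun s => GT_scale f hd hd1 i hR s
  rw [this] at h1
  exact h1.unique h2

/-- squared norm of the rescaled gradient -/
noncomputable def GN (f : MvPolynomial (Fin 2) ℝ) (d : ℕ) (T θ : ℝ) : ℝ :=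
  GT f d 0 T θ ^ 2 + GT f d 1 T θ ^ 2

@[fun_prop]
lemma GN_cont (f : MvPolynomial (Fin 2) ℝ) (d : ℕ) :
    Continuous (fun p : ℝ × ℝ => GN f d p.1 p.2) := by
  unfold GN
  exact ((GT_cont f d 0).pow 2).add ((GT_cont f d 1).pow 2)

lemma pt_polar (v : ℝ × ℝ) : ∃ θ ∈ Set.Icc (-Real.pi) Real.pi,
    v = pt (Real.sqrt (v.1 ^ 2 + v.2 ^ 2)) θ := by
  obtain ⟨x, y⟩ := v
  refine ⟨Complex.arg ⟨x, y⟩, ⟨(Complex.neg_pi_lt_arg _).le, Complex.arg_le_pi _⟩, ?_⟩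
  have hn : ‖(⟨x, y⟩ : ℂ)‖ = Real.sqrt (x ^ 2 + y ^ 2) := by
    rw [Complex.norm_def, Complex.normSq_mk, sq, sq]
  have h1 := Complex.norm_mul_cos_arg (⟨x, y⟩ : ℂ)
  have h2 := Complex.norm_mul_sin_arg (⟨x, y⟩ : ℂ)
  rw [hn] at h1 h2
  simp only [pt]
  rw [h1, h2]

lemma GN_lower (f : MvPolynomial (Fin 2) ℝ) {d : ℕ} (hd1 : 1 ≤ d)
    (hsq : ∀ a b : ℝ, (a, b) ≠ ((0 : ℝ), (0 : ℝ)) →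
      ¬ ((C b * X 0 - C a * X 1) ^ 2 ∣ homogeneousComponent d f)) :
    ∃ c0, 0 < c0 ∧ ∃ T0, 0 < T0 ∧ T0 ≤ 1 ∧ ∀ T, 0 ≤ T → T ≤ T0 →
      ∀ θ ∈ Set.Icc (-Real.pi) Real.pi, c0 ≤ GN f d T θ := by
  have hpos : ∀ θ, 0 < GN f d 0 θ := by
    intro θ
    unfold GN
    rw [GT_zero, GT_zero]
    by_contra hcon
    have e0 : EV (pderiv 0 (homogeneousComponent d f)) (pt 1 θ) = 0 := by nlinarith [sq_nonneg (EV (pderiv 0 (homogeneousComponent d f)) (pt 1 θ)), sq_nonneg (EV (pderiv 1 (homogeneousComponent d f)) (pt 1 θ))]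
    have e1 : EV (pderiv 1 (homogeneousComponent d f)) (pt 1 θ) = 0 := by nlinarith [sq_nonneg (EV (pderiv 0 (homogeneousComponent d f)) (pt 1 θ)), sq_nonneg (EV (pderiv 1 (homogeneousComponent d f)) (pt 1 θ))]
    refine grad_ne (homogeneousComponent_isHomogeneous d f) hd1 hsq (pt 1 θ) ?_ e0 e1
    intro h
    simp only [pt, Prod.mk.injEq, one_mul] at h
    have := Real.sin_sq_add_cos_sq θ
    rw [h.1, h.2] at this
    norm_num at this
  have hK : IsCompact (Set.Icc (-Real.pi) Real.pi) := isCompact_Icc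
  have hne : (Set.Icc (-Real.pi) Real.pi).Nonempty := ⟨0, by constructor <;> linarith [Real.pi_pos]⟩
  have hc0 : Continuous (fun θ => GN f d 0 θ) :=
    (GN_cont f d).comp (Continuous.prodMk continuous_const continuous_id)
  obtain ⟨θ0, _, hmin⟩ := hK.exists_isMinOn hne hc0.continuousOn
  refine ⟨GN f d 0 θ0 / 2, half_pos (hpos _), ?_⟩
  have hev : ∀ᶠ T in 𝓝 (0 : ℝ), ∀ θ ∈ Set.Icc (-Real.pi) Real.pi, GN f d 0 θ0 / 2 < GN f d T θ := by
    refine hK.eventually_forall_of_forall_eventually fun θ hθ => ?_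
    have hlt : GN f d 0 θ0 / 2 < GN f d 0 θ := by
      have : GN f d 0 θ0 ≤ GN f d 0 θ := isMinOn_iff.1 hmin θ hθ
      linarith [hpos θ0]
    have hct : Tendsto (fun p : ℝ × ℝ => GN f d p.1 p.2) (𝓝 ((0 : ℝ), θ)) (𝓝 (GN f d 0 θ)) :=
      (GN_cont f d).tendsto ((0 : ℝ), θ)
    exact hct.eventually (lt_mem_nhds hlt)
  obtain ⟨ε, hε, hb⟩ := Metric.eventually_nhds_iff.1 hev
  refine ⟨min 1 (ε / 2), by positivity, min_le_left _ _, fun T h0 hT θ hθ => (hb ?_ θ hθ).le⟩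
  rw [Real.dist_eq, sub_zero, abs_of_nonneg h0]
  have := hT.trans (min_le_right _ _)
  linarith

lemma GN_scale (f : MvPolynomial (Fin 2) ℝ) {d : ℕ} (hd : f.totalDegree = d) (hd1 : 1 ≤ d)
    {R : ℝ} (hR : 0 < R) (θ : ℝ) :
    GN f d R⁻¹ θ = ((R⁻¹) ^ (d - 1)) ^ 2 * NN (pderiv 0 f) (pderiv 1 f) (pt R θ) := by
  unfold GN NN
  rw [GT_scale f hd hd1 0 hR, GT_scale f hd hd1 1 hR]
  ring

lemma main_real (f : MvPolynomial (Fin 2) ℝ) {d : ℕ} (hd : f.totalDegree = d) (hd1 : 1 ≤ d)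
    (hsq : ∀ a b : ℝ, (a, b) ≠ ((0 : ℝ), (0 : ℝ)) →
      ¬ ((C b * X 0 - C a * X 1) ^ 2 ∣ homogeneousComponent d f))
    (hnd : ∀ v, NN (pderiv 0 f) (pderiv 1 f) v = 0 → JJ (pderiv 0 f) (pderiv 1 f) v ≠ 0) :
    ∃ K : Finset (ℝ × ℝ), (∀ v, v ∈ K ↔ NN (pderiv 0 f) (pderiv 1 f) v = 0) ∧
      ∑ z ∈ K, (if 0 < JJ (pderiv 0 f) (pderiv 1 f) z then (1 : ℝ) else -1) =
        1 - (realDegreeOf (homogeneousComponent d f) : ℝ) := by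
  obtain ⟨c0, hc0, T0, hT0, hT1, hlow⟩ := GN_lower f hd1 hsq
  have hge : ∀ v : ℝ × ℝ, (T0⁻¹) ^ 2 ≤ v.1 ^ 2 + v.2 ^ 2 →
      c0 ≤ NN (pderiv 0 f) (pderiv 1 f) v := by
    intro v hv
    obtain ⟨θ, hθ, hpt⟩ := pt_polar v
    set r := Real.sqrt (v.1 ^ 2 + v.2 ^ 2) with hr
    have hTr : T0⁻¹ ≤ r := Real.le_sqrt_of_sq_le hv
    have hTi : 1 ≤ T0⁻¹ := (one_le_inv₀ hT0).2 hT1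
    have hrpos : 0 < r := by linarith
    have h1 := hlow r⁻¹ (by positivity) (inv_le_of_inv_le₀ hT0 hTr) θ hθ
    rw [GN_scale f hd hd1 hrpos, ← hpt] at h1
    refine h1.trans ?_
    have hle : ((r⁻¹) ^ (d - 1)) ^ 2 ≤ 1 := by
      apply pow_le_one₀ (by positivity)
      apply pow_le_one₀ (by positivity)
      exact inv_le_one_of_one_le₀ (hTi.trans hTr)
    exact mul_le_of_le_one_left (NN_nonneg _ _ _) hle
  obtain ⟨K, hK, c, hc, hcc, hintegral⟩ := degree_formula (pderiv 0 f) (pderiv 1 f) hc0 hge hnd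
  refine ⟨K, hK, ?_⟩
  set S := ∑ z ∈ K, (if 0 < JJ (pderiv 0 f) (pderiv 1 f) z then (1 : ℝ) else -1) with hS
  let W : ℝ → ℝ := fun T => ∫ θ in (-Real.pi)..Real.pi, hC c0 (GN f d T θ) *
    (GT f d 0 T θ * GD f d 1 T θ - GT f d 1 T θ * GD f d 0 T θ)
  have hWc : Continuous W := by
    apply intervalIntegral.continuous_parametric_intervalIntegral_of_continuous'
    have a1 := (hC_cont hc0).comp (GN_cont f d)
    exact a1.mul (((GT_cont f d 0).mul (GD_cont f d 1)).sub ((GT_cont f d 1).mul (GD_cont f d 0)))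
  have hpi : -Real.pi ≤ Real.pi := by linarith [Real.pi_pos]
  have hWT : ∀ T, 0 < T → T ≤ T0 → W T = 2 * Real.pi * S := by
    intro T hT hTT
    have hR : 0 < T⁻¹ := inv_pos.2 hT
    have hge' : ∀ r θ, T⁻¹ ≤ r → c ≤ NN (pderiv 0 f) (pderiv 1 f) (pt r θ) := by
      intro r θ hr
      refine hcc.trans (hge _ ?_)
      have e : (pt r θ).1 ^ 2 + (pt r θ).2 ^ 2 = r ^ 2 := by
        simp only [pt]
        have := Real.sin_sq_add_cos_sq θ
        linear_combination r ^ 2 * this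
      rw [e]
      have : T0⁻¹ ≤ T⁻¹ := inv_anti₀ hT hTT
      have h3 : 0 < T0⁻¹ := inv_pos.2 hT0
      exact pow_le_pow_left₀ h3.le (this.trans hr) 2
    rw [← hintegral, green_plane _ _ hc hR hge']
    refine intervalIntegral.integral_congr fun θ hθ => ?_
    rw [Set.uIcc_of_le hpi] at hθ
    have hl := hlow T hT.le hTT θ hθ
    have hg := hge' T⁻¹ θ le_rfl
    have n0 := GN_scale f hd hd1 hR θ
    have g0 := GT_scale f hd hd1 0 hR θ
    have g1 := GT_scale f hd hd1 1 hR θ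
    have d0 := GD_scale f hd hd1 0 hR θ
    have d1 := GD_scale f hd hd1 1 hR θ
    rw [inv_inv] at n0 g0 g1 d0 d1
    rw [hC_of_ge hc0 hl, hC_of_ge hc hg, n0, g0, g1, d0, d1]
    have hTp : T ^ (d - 1) ≠ 0 := (pow_pos hT _).ne'
    have hN : NN (pderiv 0 f) (pderiv 1 f) (pt T⁻¹ θ) ≠ 0 := (hc.trans_le hg).ne'
    generalize T ^ (d - 1) = t at *
    field_simp
  have hW0 : W 0 = 2 * Real.pi * S := by
    have h1 : Tendsto W (𝓝[>] 0) (𝓝 (W 0)) := (hWc.tendsto 0).mono_left nhdsWithin_le_nhds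
    have h2 : Tendsto W (𝓝[>] 0) (𝓝 (2 * Real.pi * S)) := by
      refine tendsto_const_nhds.congr' ?_
      filter_upwards [Ioc_mem_nhdsGT hT0] with T hT
      exact (hWT T hT.1 hT.2).symm
    exact tendsto_nhds_unique h1 h2
  have hW1 : W 0 = 2 * Real.pi * (1 - (realDegreeOf (homogeneousComponent d f) : ℝ)) := by
    rw [← hom_index (homogeneousComponent_isHomogeneous d f) hd1 hsq]
    refine intervalIntegral.integral_congr fun θ hθ => ?_
    rw [Set.uIcc_of_le hpi] at hθ
    have hl := hlow 0 le_rfl hT0.le θ hθ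
    rw [hC_of_ge hc0 hl]
    simp only [GN, GT_zero, GD_zero]
    rw [one_div, mul_comm, div_eq_mul_inv]
  have htwopi : (2 * Real.pi) ≠ 0 := by positivity
  exact mul_left_cancel₀ htwopi (hW0.symm.trans hW1)

theorem extrema_minus_saddles_eq_one_sub_real_degree
    (f : MvPolynomial (Fin 2) ℝ) (d : ℕ) (hd : f.totalDegree = d) (hd1 : 1 ≤ d)
    (hnd : ∀ p : ℝ × ℝ, IsCriticalPt f p → hessDet f p ≠ 0)
    (hsq : ∀ a b : ℝ, (a, b) ≠ ((0 : ℝ), (0 : ℝ)) →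
      ¬ ((C b * X 0 - C a * X 1) ^ 2 ∣ homogeneousComponent d f)) :
    {p : ℝ × ℝ | IsCriticalPt f p}.Finite ∧
    ({p : ℝ × ℝ | IsCriticalPt f p ∧ 0 < hessDet f p}.ncard : ℤ) -
      ({p : ℝ × ℝ | IsCriticalPt f p ∧ hessDet f p < 0}.ncard : ℤ) =
      1 - (realDegreeOf (homogeneousComponent d f) : ℤ) := by
  have hcrit : ∀ p, IsCriticalPt f p ↔ NN (pderiv 0 f) (pderiv 1 f) p = 0 := by
    intro p
    unfold IsCriticalPt NN EV
    constructor
    · rintro ⟨h1, h2⟩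
      rw [h1, h2]; norm_num
    · intro h
      constructor <;> nlinarith [sq_nonneg (evalP (pderiv 0 f) p.1 p.2),
        sq_nonneg (evalP (pderiv 1 f) p.1 p.2)]
  have hhess : ∀ p, hessDet f p = JJ (pderiv 0 f) (pderiv 1 f) p := by
    intro p
    unfold hessDet JJ EV
    rw [pderiv_swap f]
    ring
  obtain ⟨K, hK, hsum⟩ := main_real f hd hd1 hsq
    (fun v hv => by rw [← hhess]; exact hnd v ((hcrit v).2 hv))
  have hset : {p : ℝ × ℝ | IsCriticalPt f p} = ↑K := by
    ext p
    simp [hcrit, hK]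
  have h1 : {p : ℝ × ℝ | IsCriticalPt f p ∧ 0 < hessDet f p} =
      ↑(K.filter fun z => 0 < JJ (pderiv 0 f) (pderiv 1 f) z) := by
    ext p
    simp [hcrit, hK, hhess]
  have h2 : {p : ℝ × ℝ | IsCriticalPt f p ∧ hessDet f p < 0} =
      ↑(K.filter fun z => ¬ 0 < JJ (pderiv 0 f) (pderiv 1 f) z) := by
    ext p
    simp only [Set.mem_ofPred_eq, Finset.coe_filter, hK, hcrit, hhess, not_lt]
    refine and_congr_right fun h => ⟨le_of_lt, fun h' => lt_of_le_of_ne h' ?_⟩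
    rw [← hhess]
    exact hnd p ((hcrit p).2 h)
  refine ⟨hset ▸ K.finite_toSet, ?_⟩
  rw [h1, h2, Set.ncard_coe_finset, Set.ncard_coe_finset]
  rw [Finset.sum_ite, Finset.sum_const, Finset.sum_const] at hsum
  simp only [nsmul_eq_mul, mul_one, mul_neg] at hsum
  rw [← sub_eq_add_neg] at hsum
  exact_mod_cast hsum
end

section
/- Let f : ℝ² → ℝ be a real polynomial function of degree d in two variables with only finitely many critical points, whose tangency polynomial T(x,y) = x·f_y − y·f_x is not identically zero. Let (a,b) ≠ (0,0) and suppose the linear form b·x − a·y divides the degree-d homogeneous part f_d with multiplicity exactly m ≥ 1. Then there exists R₀ > 0 such that for every R ≥ R₀, the number of connected components γ of {(x,y) : T(x,y) = 0 and ‖(x,y)‖ > R} having the property that some sequence (x_n, y_n) ∈ γ satisfies ‖(x_n, y_n)‖ → ∞ and [x_n : y_n] → [a : b] in the real projective line, is at most 2(m − 1). -/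
open MvPolynomial Filter

/-- The Euclidean norm on `ℝ²`. -/
noncomputable def enorm2 (p : ℝ × ℝ) : ℝ := Real.sqrt (p.1 ^ 2 + p.2 ^ 2)

/-- The tangency polynomial `T = x·f_y − y·f_x` whose zero set is the curve of
tangencies of the level sets of `f` with the circles centered at the origin. -/
noncomputable def tangencyPoly (f : MvPolynomial (Fin 2) ℝ) : MvPolynomial (Fin 2) ℝ :=
  X 0 * pderiv 1 f - X 1 * pderiv 0 f

/-- The part of the curve of tangencies of `f` lying outside the closed disk of
radius `R` centered at the origin. -/
noncomputable def tangencyFar (f : MvPolynomial (Fin 2) ℝ) (R : ℝ) : Set (ℝ × ℝ) :=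
  {q : ℝ × ℝ | evalP (tangencyPoly f) q.1 q.2 = 0 ∧ R < enorm2 q}

/-- The set of ends of the curve of tangencies of `f` beyond radius `R` which approach
the point `[a : b]` of the real line at infinity: connected components `γ` of the part
of the curve of tangencies outside the disk of radius `R` containing a sequence of
points going to infinity whose directions converge to `[a : b]` in the real projective
line. -/
def endsToward (f : MvPolynomial (Fin 2) ℝ) (R a b : ℝ) : Set (Set (ℝ × ℝ)) :=
  {γ : Set (ℝ × ℝ) |
    (∃ p ∈ tangencyFar f R, γ = connectedComponentIn (tangencyFar f R) p) ∧
    ∃ z : ℕ → ℝ × ℝ, (∀ n, z n ∈ γ) ∧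
      Filter.Tendsto (fun n => enorm2 (z n)) Filter.atTop Filter.atTop ∧
      Filter.Tendsto (fun n => (b * (z n).1 - a * (z n).2) / enorm2 (z n))
        Filter.atTop (nhds 0)}

lemma tp_add (p q : MvPolynomial (Fin 2) ℝ) :
    tangencyPoly (p + q) = tangencyPoly p + tangencyPoly q := by
  simp only [tangencyPoly, map_add]; ring

lemma tp_mul (p q : MvPolynomial (Fin 2) ℝ) :
    tangencyPoly (p * q) = p * tangencyPoly q + q * tangencyPoly p := by
  simp only [tangencyPoly, Derivation.leibniz, smul_eq_mul]; ring

lemma tp_pow (p : MvPolynomial (Fin 2) ℝ) (n : ℕ) :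
    tangencyPoly (p ^ (n + 1)) = ((n : MvPolynomial (Fin 2) ℝ) + 1) * p ^ n * tangencyPoly p := by
  induction n with
  | zero => simp
  | succ n ih =>
    rw [pow_succ, tp_mul, ih]; push_cast; ring

lemma tp_zero : tangencyPoly 0 = 0 := by simp [tangencyPoly]

lemma tp_iter_zero (j : ℕ) : tangencyPoly^[j] 0 = 0 := by
  induction j with
  | zero => rfl
  | succ j ih => rw [Function.iterate_succ_apply, tp_zero, ih]

lemma tp_iter_add (j : ℕ) (p q : MvPolynomial (Fin 2) ℝ) :
    tangencyPoly^[j] (p + q) = tangencyPoly^[j] p + tangencyPoly^[j] q := by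
  induction j generalizing p q with
  | zero => rfl
  | succ j ih => simp only [Function.iterate_succ_apply, tp_add, ih]

lemma tp_iter_sum (j : ℕ) (s : Finset ℕ) (q : ℕ → MvPolynomial (Fin 2) ℝ) :
    tangencyPoly^[j] (∑ k ∈ s, q k) = ∑ k ∈ s, tangencyPoly^[j] (q k) := by
  classical
  induction s using Finset.induction_on with
  | empty => simp [tp_iter_zero]
  | insert a s ha ih => rw [Finset.sum_insert ha, Finset.sum_insert ha, tp_iter_add, ih]

lemma tp_hom {p : MvPolynomial (Fin 2) ℝ} {n : ℕ} (h : p.IsHomogeneous n) :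
    (tangencyPoly p).IsHomogeneous n := by
  rcases Nat.eq_zero_or_pos n with rfl | hn
  · rw [← totalDegree_zero_iff_isHomogeneous, totalDegree_eq_zero_iff_eq_C] at h
    rw [h]
    simp only [tangencyPoly, pderiv_C, mul_zero, sub_zero]
    exact isHomogeneous_zero _ _ _
  · have e : 1 + (n - 1) = n := by omega
    have h0 := (isHomogeneous_X ℝ (0 : Fin 2)).mul (h.pderiv (i := 1))
    have h1 := (isHomogeneous_X ℝ (1 : Fin 2)).mul (h.pderiv (i := 0))
    rw [e] at h0 h1
    exact h0.sub h1

lemma tp_iter_hom (j : ℕ) {p : MvPolynomial (Fin 2) ℝ} {n : ℕ} (h : p.IsHomogeneous n) :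
    (tangencyPoly^[j] p).IsHomogeneous n := by
  induction j generalizing p with
  | zero => exact h
  | succ j ih => rw [Function.iterate_succ_apply]; exact ih (tp_hom h)

lemma hom_aeval {A : Type*} [CommRing A] [Algebra ℝ A] {p : MvPolynomial (Fin 2) ℝ} {n : ℕ}
    (h : p.IsHomogeneous n) (c : A) (v : Fin 2 → A) :
    aeval (fun i => c * v i) p = c ^ n * aeval v p := by
  rw [aeval_def, aeval_def, eval₂_eq', eval₂_eq', Finset.mul_sum]
  refine Finset.sum_congr rfl fun d hd => ?_
  have := h.degree_eq_sum_deg_support hd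
  have e : d 0 + d 1 = n := by
    have := h (mem_support_iff.mp hd)
    simpa [Finsupp.weight_apply, Finsupp.sum_fintype] using this
  simp only [Fin.prod_univ_two, ← e]
  ring

lemma hom_evalP {p : MvPolynomial (Fin 2) ℝ} {n : ℕ}
    (h : p.IsHomogeneous n) (c x y : ℝ) :
    evalP p (c * x) (c * y) = c ^ n * evalP p x y := by
  have := hom_aeval h c ![x, y]
  rw [aeval_eq_eval, aeval_eq_eval] at this
  simp only [evalP]
  refine Eq.trans ?_ this
  congr 2
  ext i; fin_cases i <;> simp

lemma lin_dvd {p : MvPolynomial (Fin 2) ℝ} {n : ℕ} (h : p.IsHomogeneous n) (a b : ℝ)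
    (hab : a ^ 2 + b ^ 2 ≠ 0) (h0 : evalP p a b = 0) :
    (C b * X 0 - C a * X 1 : MvPolynomial (Fin 2) ℝ) ∣ p := by
  set L : MvPolynomial (Fin 2) ℝ := C b * X 0 - C a * X 1 with hL
  let I := Ideal.span {L}
  rw [← Ideal.mem_span_singleton, ← Ideal.Quotient.eq_zero_iff_mem]
  let π := Ideal.Quotient.mkₐ ℝ I
  have hπ : ∀ q, π q = aeval (fun i => π (X i)) q := by
    intro q
    have : π = aeval (fun i => π (X i)) := by
      ext i; simp
    exact DFunLike.congr_fun this q
  have hz : π L = 0 := Ideal.Quotient.eq_zero_iff_mem.mpr (Ideal.mem_span_singleton_self L)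
  have e1 := hom_aeval h (algebraMap ℝ _ (a ^ 2 + b ^ 2)) (fun i => π (X i))
  have e2 := hom_aeval h (π (C a * X 0 + C b * X 1)) (fun i => algebraMap ℝ _ (![a, b] i))
  have e3 : (fun i => algebraMap ℝ (MvPolynomial (Fin 2) ℝ ⧸ I) (a ^ 2 + b ^ 2) * π (X i)) =
      (fun i => π (C a * X 0 + C b * X 1) * algebraMap ℝ _ (![a, b] i)) := by
    have hc : ∀ r : ℝ, algebraMap ℝ (MvPolynomial (Fin 2) ℝ ⧸ I) r = π (C r) := fun r => rfl
    funext i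
    rw [hc, hc, ← map_mul, ← map_mul, ← sub_eq_zero, ← map_sub]
    fin_cases i
    · have : (C (a ^ 2 + b ^ 2) * X 0 - (C a * X 0 + C b * X 1) * C a : MvPolynomial (Fin 2) ℝ)
          = C b * L := by
        rw [hL]; simp only [map_add, map_pow]; ring
      simpa [this, hz] using congrArg π this
    · have : (C (a ^ 2 + b ^ 2) * X 1 - (C a * X 0 + C b * X 1) * C b : MvPolynomial (Fin 2) ℝ)
          = - C a * L := by
        rw [hL]; simp only [map_add, map_pow]; ring
      simpa [this, hz] using congrArg π this
  have e4 : aeval (fun i => algebraMap ℝ (MvPolynomial (Fin 2) ℝ ⧸ I) (![a, b] i)) p = 0 := by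
    have : aeval (fun i => algebraMap ℝ (MvPolynomial (Fin 2) ℝ ⧸ I) (![a, b] i)) p
        = algebraMap ℝ _ (evalP p a b) := by
      rw [evalP, ← coe_aeval_eq_eval]
      exact aeval_algebraMap_apply _ _ _
    rw [this, h0, map_zero]
  rw [e3, e2, e4, mul_zero, ← hπ] at e1
  have hu : IsUnit ((algebraMap ℝ (MvPolynomial (Fin 2) ℝ ⧸ I) (a ^ 2 + b ^ 2)) ^ n) :=
    ((IsUnit.mk0 _ hab).map _).pow n
  exact (hu.mul_right_eq_zero).mp e1.symm

lemma eval_iter (L g : MvPolynomial (Fin 2) ℝ) (m : ℕ) (a b : ℝ) (hL : evalP L a b = 0) :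
    evalP (tangencyPoly^[m] (L ^ m * g)) a b =
      m.factorial * (evalP (tangencyPoly L) a b) ^ m * evalP g a b := by
  induction m generalizing g with
  | zero => simp
  | succ m ih =>
    have : tangencyPoly (L ^ (m + 1) * g) = L ^ m * (L * tangencyPoly g +
        ((m : MvPolynomial (Fin 2) ℝ) + 1) * tangencyPoly L * g) := by
      rw [tp_mul, tp_pow]; ring
    rw [Function.iterate_succ_apply, this, ih, Nat.factorial_succ]
    simp only [evalP] at hL ⊢
    simp only [map_add, map_mul, hL, map_natCast, map_one]
    push_cast; ring

lemma lead_ne (P : MvPolynomial (Fin 2) ℝ) (d : ℕ) (hP : P.IsHomogeneous d)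
    (a b : ℝ) (hab : a ^ 2 + b ^ 2 ≠ 0) (m : ℕ)
    (hdvd : (C b * X 0 - C a * X 1) ^ m ∣ P)
    (hndvd : ¬ (C b * X 0 - C a * X 1) ^ (m + 1) ∣ P) :
    evalP (tangencyPoly^[m] P) a b ≠ 0 := by
  have hLh : (C b * X 0 - C a * X 1 : MvPolynomial (Fin 2) ℝ).IsHomogeneous 1 :=
    (isHomogeneous_C_mul_X b 0).sub (isHomogeneous_C_mul_X a 1)
  have hL0 : evalP (C b * X 0 - C a * X 1) a b = 0 := by simp [evalP]; ring
  have hL1 : evalP (tangencyPoly (C b * X 0 - C a * X 1)) a b = - (a ^ 2 + b ^ 2) := by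
    simp [evalP, tangencyPoly, pderiv_X]; ring
  have hdiv := fun (g : MvPolynomial (Fin 2) ℝ) n (hg : g.IsHomogeneous n) h0 =>
    lin_dvd hg a b hab h0
  generalize (C b * X 0 - C a * X 1 : MvPolynomial (Fin 2) ℝ) = L at *
  obtain ⟨g, hg⟩ := hdvd
  have key : ∃ g' n, IsHomogeneous g' n ∧ P = L ^ m * g' := by
    have h1 : P = homogeneousComponent d (L ^ m * g) := by
      rw [← hg]; exact (homogeneousComponent_eq_self hP).symm
    have h2 : ∀ i, homogeneousComponent d (L ^ m * homogeneousComponent i g) =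
        if m + i = d then L ^ m * homogeneousComponent i g else 0 := by
      intro i
      have := (hLh.pow m).mul (homogeneousComponent_isHomogeneous i g)
      rw [one_mul] at this
      rw [homogeneousComponent_of_mem this]
      simp only [eq_comm]
    rw [← sum_homogeneousComponent g, Finset.mul_sum, map_sum] at h1
    simp only [h2] at h1
    by_cases hmd : m ≤ d
    · refine ⟨homogeneousComponent (d - m) g, _, homogeneousComponent_isHomogeneous _ _, ?_⟩
      have h3 : ∀ i, (m + i = d) ↔ (i = d - m) := by intro i; omega
      simp only [h3, Finset.sum_ite_eq'] at h1
      rw [h1]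
      split_ifs with hmem
      · rfl
      · rw [homogeneousComponent_eq_zero, mul_zero]
        simp only [Finset.mem_range] at hmem; omega
    · exfalso
      apply hndvd
      have : P = 0 := by
        rw [h1]
        refine Finset.sum_eq_zero fun i _ => if_neg (by omega)
      rw [this]; exact dvd_zero _
  obtain ⟨g', n, hg', hPg⟩ := key
  rw [hPg, eval_iter L g' m a b hL0, hL1]
  refine mul_ne_zero (mul_ne_zero (by positivity) (pow_ne_zero _ (neg_ne_zero.mpr hab))) ?_
  intro h0
  obtain ⟨k, hk⟩ := hdiv g' n hg' h0
  apply hndvd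
  rw [hPg, hk]
  exact ⟨k, by ring⟩

lemma evalP_hasDerivAt (f : MvPolynomial (Fin 2) ℝ) (r α β s : ℝ) :
    HasDerivAt (fun s => evalP f (r * (α * Real.cos s - β * Real.sin s))
      (r * (β * Real.cos s + α * Real.sin s)))
      (evalP (tangencyPoly f) (r * (α * Real.cos s - β * Real.sin s))
      (r * (β * Real.cos s + α * Real.sin s))) s := by
  induction f using MvPolynomial.induction_on with
  | C c => simpa [evalP, tangencyPoly] using hasDerivAt_const s c
  | add p q hp hq =>
    rw [tp_add]
    simp only [evalP, map_add] at *
    exact hp.add hq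
  | mul_X p i hp =>
    have hX : HasDerivAt (fun s => evalP (X i) (r * (α * Real.cos s - β * Real.sin s))
      (r * (β * Real.cos s + α * Real.sin s)))
      (evalP (tangencyPoly (X i)) (r * (α * Real.cos s - β * Real.sin s))
      (r * (β * Real.cos s + α * Real.sin s))) s := by
      have hc := Real.hasDerivAt_cos s
      have hs := Real.hasDerivAt_sin s
      fin_cases i
      · simp [evalP, tangencyPoly, pderiv_X]
        exact (((hc.const_mul α).sub (hs.const_mul β)).const_mul r).congr_deriv (by ring)
      · simp [evalP, tangencyPoly, pderiv_X]
        exact (((hc.const_mul β).add (hs.const_mul α)).const_mul r).congr_deriv (by ring)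
    rw [tp_mul]
    simp only [evalP, map_add, map_mul] at *
    exact (hp.mul hX).congr_deriv (by ring)

lemma evalP_continuous {Z : Type*} [TopologicalSpace Z] (f : MvPolynomial (Fin 2) ℝ)
    {x y : Z → ℝ} (hx : Continuous x) (hy : Continuous y) :
    Continuous fun z => evalP f (x z) (y z) := by
  have h : Continuous fun z => ![x z, y z] := by
    refine continuous_pi fun i => ?_
    fin_cases i
    · exact hx
    · exact hy
  exact (MvPolynomial.continuous_eval f).comp h

lemma rolle_count (I : Set ℝ) (hI : I.OrdConnected) (n : ℕ) (g : ℕ → ℝ → ℝ)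
    (hg : ∀ j s, HasDerivAt (g j) (g (j + 1) s) s) (hn : ∀ s ∈ I, g n s ≠ 0) :
    ∀ Z : Finset ℝ, (∀ s ∈ Z, s ∈ I ∧ g 0 s = 0) → Z.card ≤ n := by
  induction n generalizing g with
  | zero =>
    intro Z hZ
    have : Z = ∅ := Finset.eq_empty_of_forall_notMem fun s hs => hn s (hZ s hs).1 (hZ s hs).2
    simp [this]
  | succ n ih =>
    intro Z hZ
    have ih' := ih (fun j => g (j + 1)) (fun j s => hg (j + 1) s) hn
    have hfin : {s | s ∈ I ∧ g 1 s = 0}.Finite := by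
      by_contra hinf
      obtain ⟨t, ht, hc⟩ := Set.Infinite.exists_subset_card_eq hinf (n + 1)
      have := ih' t fun s hs => ht hs
      omega
    have h1 := ih' hfin.toFinset fun s hs => by simpa using hs
    refine (Finset.card_le_of_interleaved (t := hfin.toFinset) ?_).trans (by omega)
    intro x hx y hy hxy _
    obtain ⟨c, hc, hc'⟩ := exists_hasDerivAt_eq_zero (f := g 0) (f' := g 1) hxy
      (fun s _ => (hg 0 s).continuousAt.continuousWithinAt)
      (by rw [(hZ x hx).2, (hZ y hy).2]) (fun s _ => hg 0 s)
    refine ⟨c, ?_, hc.1, hc.2⟩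
    simp only [Set.Finite.mem_toFinset, Set.mem_ofPred_eq]
    exact ⟨hI.out (hZ x hx).1 (hZ y hy).1 ⟨hc.1.le, hc.2.le⟩, hc'⟩

lemma uniform_ne (d : ℕ) (q : ℕ → MvPolynomial (Fin 2) ℝ) (hq : ∀ k, (q k).IsHomogeneous k)
    (x y : ℝ → ℝ) (hx : Continuous x) (hy : Continuous y) (s₀ : ℝ)
    (h : evalP (q d) (x s₀) (y s₀) ≠ 0) :
    ∃ ε > 0, ∃ R > 0, ∀ r ≥ R, ∀ s, |s - s₀| ≤ ε →
      evalP (∑ k ∈ Finset.range (d + 1), q k) (r * x s) (r * y s) ≠ 0 := by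
  let G : ℝ × ℝ → ℝ := fun p => ∑ k ∈ Finset.range (d + 1),
    p.1 ^ (d - k) * evalP (q k) (x p.2) (y p.2)
  have hG : Continuous G := by
    refine continuous_finsetSum _ fun k _ => ?_
    have h3 : Continuous fun p : ℝ × ℝ => evalP (q k) (x p.2) (y p.2) :=
      evalP_continuous (q k) (hx.comp continuous_snd) (hy.comp continuous_snd)
    exact (continuous_fst.pow _).mul h3
  have hG0 : G (0, s₀) ≠ 0 := by
    have : G (0, s₀) = evalP (q d) (x s₀) (y s₀) := by
      simp only [G]
      rw [Finset.sum_eq_single d]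
      · simp
      · intro k hk hkd
        have : d - k ≠ 0 := by
          have := Finset.mem_range.mp hk; omega
        simp [this]
      · simp
    rwa [this]
  have hev : ∀ᶠ p in nhds ((0 : ℝ), s₀), G p ≠ 0 := hG.continuousAt.eventually_ne hG0
  obtain ⟨δ, hδ, hball⟩ := Metric.eventually_nhds_iff.mp hev
  refine ⟨δ / 2, by positivity, 2 / δ, by positivity, fun r hr s hs => ?_⟩
  have hr0 : 0 < r := lt_of_lt_of_le (by positivity) hr
  have hGr : G (1 / r, s) ≠ 0 := by
    apply hball
    rw [Prod.dist_eq, max_lt_iff, Real.dist_eq, Real.dist_eq]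
    constructor
    · rw [sub_zero, abs_of_pos (by positivity)]
      rw [ge_iff_le, div_le_iff₀ hδ] at hr
      rw [div_lt_iff₀ hr0]; linarith
    · simp only; linarith
  have : evalP (∑ k ∈ Finset.range (d + 1), q k) (r * x s) (r * y s) = r ^ d * G (1 / r, s) := by
    have h1 : evalP (∑ k ∈ Finset.range (d + 1), q k) (r * x s) (r * y s) =
      ∑ k ∈ Finset.range (d + 1), evalP (q k) (r * x s) (r * y s) := by simp [evalP]
    rw [h1, Finset.mul_sum]
    refine Finset.sum_congr rfl fun k hk => ?_
    rw [hom_evalP (hq k)]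
    have hk' : d = k + (d - k) := by have := Finset.mem_range.mp hk; omega
    have : r ^ d = r ^ k * r ^ (d - k) := by rw [← pow_add, ← hk']
    rw [this]
    field_simp
    simp [hr0.ne']
  rw [this]
  exact mul_ne_zero (by positivity) hGr

lemma polar (α β : ℝ) (h1 : α ^ 2 + β ^ 2 = 1) (p : ℝ × ℝ) (hu : 0 < α * p.1 + β * p.2) :
    p.1 = enorm2 p * (α * Real.cos (Real.arctan ((α * p.2 - β * p.1) / (α * p.1 + β * p.2))) -
      β * Real.sin (Real.arctan ((α * p.2 - β * p.1) / (α * p.1 + β * p.2)))) ∧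
    p.2 = enorm2 p * (β * Real.cos (Real.arctan ((α * p.2 - β * p.1) / (α * p.1 + β * p.2))) +
      α * Real.sin (Real.arctan ((α * p.2 - β * p.1) / (α * p.1 + β * p.2)))) := by
  obtain ⟨x, y⟩ := p
  simp only at *
  set u := α * x + β * y with hu'
  set w := α * y - β * x with hw'
  have hx : x = α * u - β * w := by rw [hu', hw']; linear_combination (-x) * h1
  have hy : y = β * u + α * w := by rw [hu', hw']; linear_combination (-y) * h1
  have hr : enorm2 (x, y) = u * √(1 + (w / u) ^ 2) := by
    have : u * √(1 + (w / u) ^ 2) = √(u ^ 2 * (1 + (w / u) ^ 2)) := by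
      rw [Real.sqrt_mul (sq_nonneg u), Real.sqrt_sq hu.le]
    rw [this, enorm2]
    congr 1
    field_simp
    rw [hu', hw']
    linear_combination (-(x ^ 2 + y ^ 2)) * h1
  have hs : √(1 + (w / u) ^ 2) ≠ 0 := by positivity
  rw [hr, Real.cos_arctan, Real.sin_arctan]
  constructor
  · nth_rewrite 1 [hx]; field_simp
  · nth_rewrite 1 [hy]; field_simp

/-- Components of the far curve which contain points of arbitrarily large norm in arbitrarily
narrow sectors around the oriented direction `(α, β)`. -/
def sideEnds (f : MvPolynomial (Fin 2) ℝ) (R α β : ℝ) : Set (Set (ℝ × ℝ)) :=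
  {γ : Set (ℝ × ℝ) |
    (∃ p ∈ tangencyFar f R, γ = connectedComponentIn (tangencyFar f R) p) ∧
    ∀ c > 0, ∀ M : ℝ, ∃ z ∈ γ, M < enorm2 z ∧
      |α * z.2 - β * z.1| < c * (α * z.1 + β * z.2)}

lemma rolle_poly (P : MvPolynomial (Fin 2) ℝ) (r α β ε : ℝ) (n : ℕ)
    (h : ∀ s ∈ Set.Icc (-ε) ε, evalP (tangencyPoly^[n + 1] P) (r * (α * Real.cos s - β * Real.sin s))
      (r * (β * Real.cos s + α * Real.sin s)) ≠ 0) (Z : Finset ℝ)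
    (hZ : ∀ s ∈ Z, s ∈ Set.Icc (-ε) ε ∧ evalP (tangencyPoly P) (r * (α * Real.cos s - β * Real.sin s))
      (r * (β * Real.cos s + α * Real.sin s)) = 0) : Z.card ≤ n := by
  refine rolle_count (Set.Icc (-ε) ε) Set.ordConnected_Icc n
    (fun j s => evalP (tangencyPoly^[j + 1] P) (r * (α * Real.cos s - β * Real.sin s))
      (r * (β * Real.cos s + α * Real.sin s))) ?_ h Z hZ
  intro j s
  rw [Function.iterate_succ_apply' tangencyPoly (j + 1)]
  exact evalP_hasDerivAt _ r α β s

lemma finite_of_card_le {X : Type*} (S : Set X) (n : ℕ)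
    (h : ∀ F : Finset X, (∀ x ∈ F, x ∈ S) → F.card ≤ n) : S.Finite ∧ S.ncard ≤ n := by
  have hfin : S.Finite := by
    by_contra hinf
    obtain ⟨t, ht, hc⟩ := Set.Infinite.exists_subset_card_eq hinf (n + 1)
    have := h t fun s hs => ht hs
    omega
  refine ⟨hfin, ?_⟩
  rw [Set.ncard_eq_toFinset_card S hfin]
  exact h _ fun x hx => by simpa using hx

lemma enorm2_continuous : Continuous enorm2 := by
  unfold enorm2; fun_prop

lemma side_bound (f : MvPolynomial (Fin 2) ℝ) (d : ℕ) (hd : f.totalDegree = d)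
    (α β : ℝ) (h1 : α ^ 2 + β ^ 2 = 1) (n : ℕ)
    (hne : evalP (tangencyPoly^[n + 1] (homogeneousComponent d f)) α β ≠ 0) :
    ∃ R₀ : ℝ, 0 < R₀ ∧ ∀ R : ℝ, R₀ ≤ R →
      (sideEnds f R α β).Finite ∧ (sideEnds f R α β).ncard ≤ n := by
  have hsum : ∀ j, tangencyPoly^[j] f = ∑ k ∈ Finset.range (d + 1),
      tangencyPoly^[j] (homogeneousComponent k f) := by
    intro j
    rw [← tp_iter_sum, ← hd, sum_homogeneousComponent]
  have hhom : ∀ j k, (tangencyPoly^[j] (homogeneousComponent k f)).IsHomogeneous k :=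
    fun j k => tp_iter_hom j (homogeneousComponent_isHomogeneous k f)
  have hcx : Continuous fun s : ℝ => α * Real.cos s - β * Real.sin s := by fun_prop
  have hcy : Continuous fun s : ℝ => β * Real.cos s + α * Real.sin s := by fun_prop
  obtain ⟨ε₁, hε₁, R₁, hR₁, H₁⟩ := uniform_ne d _ (hhom (n + 1)) _ _ hcx hcy 0 (by simpa using hne)
  rw [← hsum] at H₁
  -- the leading form has finitely many tangency directions nearby
  have hev : ∀ᶠ s in nhds (0 : ℝ), evalP (tangencyPoly^[n + 1] (homogeneousComponent d f))
      (α * Real.cos s - β * Real.sin s) (β * Real.cos s + α * Real.sin s) ≠ 0 :=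
    (evalP_continuous _ hcx hcy).continuousAt.eventually_ne (by simpa using hne)
  obtain ⟨ε₂, hε₂, H₂⟩ := Metric.eventually_nhds_iff.mp hev
  set η := min ε₁ (min (ε₂ / 2) 1) with hη
  have hη0 : 0 < η := by positivity
  have hηa : η ≤ ε₁ := min_le_left _ _
  have hηb : η ≤ ε₂ / 2 := (min_le_right _ _).trans (min_le_left _ _)
  have hηc : η ≤ 1 := (min_le_right _ _).trans (min_le_right _ _)
  have hZ : {s | s ∈ Set.Icc (-η) η ∧ evalP (tangencyPoly (homogeneousComponent d f))
      (α * Real.cos s - β * Real.sin s) (β * Real.cos s + α * Real.sin s) = 0}.Finite := by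
    refine (finite_of_card_le _ n fun F hF => ?_).1
    refine rolle_poly (homogeneousComponent d f) 1 α β η n ?_ F ?_
    · intro s hs
      rw [one_mul, one_mul]
      apply H₂
      rw [Real.dist_eq, sub_zero]
      have := abs_le.mpr hs
      linarith
    · intro s hs
      rw [one_mul, one_mul]
      exact hF s hs
  obtain ⟨ε, hεI, hεZ⟩ := ((Set.Ioo_infinite hη0).sdiff
    (hZ.union (hZ.preimage (neg_injective.injOn (s := _))))).nonempty
  rw [Set.mem_union, not_or] at hεZ
  obtain ⟨hε0, hεη⟩ := hεI
  have hp : evalP (tangencyPoly (homogeneousComponent d f))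
      (α * Real.cos ε - β * Real.sin ε) (β * Real.cos ε + α * Real.sin ε) ≠ 0 :=
    fun h => hεZ.1 ⟨⟨by linarith, by linarith⟩, h⟩
  have hm : evalP (tangencyPoly (homogeneousComponent d f))
      (α * Real.cos (-ε) - β * Real.sin (-ε)) (β * Real.cos (-ε) + α * Real.sin (-ε)) ≠ 0 :=
    fun h => hεZ.2 ⟨⟨by linarith, by linarith⟩, h⟩
  obtain ⟨δ₂, hδ₂, R₂, hR₂, H₃⟩ := uniform_ne d _ (hhom 1) _ _ hcx hcy ε hp
  obtain ⟨δ₃, hδ₃, R₃, hR₃, H₄⟩ := uniform_ne d _ (hhom 1) _ _ hcx hcy (-ε) hm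
  rw [← hsum] at H₃ H₄
  clear hsum hhom hev H₂ hZ hεZ hp hm
  refine ⟨max R₁ (max R₂ R₃), by positivity, fun R hR => ?_⟩
  have hRa : R₁ ≤ R := (le_max_left _ _).trans hR
  have hRb : R₂ ≤ R := ((le_max_left _ _).trans (le_max_right _ _)).trans hR
  have hRc : R₃ ≤ R := ((le_max_right _ _).trans (le_max_right _ _)).trans hR
  have hR0 : 0 < R := lt_of_lt_of_le hR₁ hRa
  have hπ : ε < Real.pi / 2 := by have := Real.pi_gt_three; linarith
  have hat : Real.arctan (Real.tan ε) = ε := Real.arctan_tan (by linarith) hπ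
  have htan : 0 < Real.tan ε := Real.tan_pos_of_pos_of_lt_pi_div_two hε0 hπ
  set c := Real.tan ε with hc
  -- each such component stays in the sector
  have hsector : ∀ γ ∈ sideEnds f R α β, ∀ z ∈ γ,
      |α * z.2 - β * z.1| < c * (α * z.1 + β * z.2) := by
    rintro γ ⟨⟨p, hpF, rfl⟩, hγ⟩ z hz
    by_contra hcon
    push Not at hcon
    obtain ⟨z₀, hz₀, -, hz₀'⟩ := hγ c htan 0
    have hcont : ContinuousOn (fun z : ℝ × ℝ => c * (α * z.1 + β * z.2) - |α * z.2 - β * z.1|)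
        (connectedComponentIn (tangencyFar f R) p) := by fun_prop
    obtain ⟨q, hq, hq0⟩ := isPreconnected_connectedComponentIn.intermediate_value hz hz₀ hcont
      (show (0 : ℝ) ∈ _ from ⟨sub_nonpos.mpr hcon, (sub_pos.mpr hz₀').le⟩)
    simp only at hq0
    obtain ⟨hqT, hqR⟩ := connectedComponentIn_subset _ _ hq
    have hu0 : 0 < α * q.1 + β * q.2 := by
      by_contra hle
      push Not at hle
      have ha := abs_nonneg (α * q.2 - β * q.1)
      have hcu : c * (α * q.1 + β * q.2) ≤ 0 := mul_nonpos_of_nonneg_of_nonpos htan.le hle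
      have hw : α * q.2 - β * q.1 = 0 := abs_eq_zero.mp (by linarith)
      have hu : α * q.1 + β * q.2 = 0 := by
        have : c * (α * q.1 + β * q.2) = 0 := by linarith
        rcases mul_eq_zero.mp this with h | h
        · exact absurd h htan.ne'
        · exact h
      have : q.1 ^ 2 + q.2 ^ 2 = 0 := by
        have e : q.1 ^ 2 + q.2 ^ 2 = (α * q.1 + β * q.2) ^ 2 + (α * q.2 - β * q.1) ^ 2 := by
          linear_combination (-(q.1 ^ 2 + q.2 ^ 2)) * h1
        rw [e, hu, hw]; ring
      rw [enorm2, this, Real.sqrt_zero] at hqR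
      linarith
    obtain ⟨e1, e2⟩ := polar α β h1 q hu0
    have habs : |α * q.2 - β * q.1| = c * (α * q.1 + β * q.2) := by linarith
    rcases abs_choice (α * q.2 - β * q.1) with h | h
    · have : (α * q.2 - β * q.1) / (α * q.1 + β * q.2) = c := by
        rw [div_eq_iff hu0.ne']; linarith
      rw [this, hat] at e1 e2
      apply H₃ (enorm2 q) (by linarith) ε (by simpa using hδ₂.le)
      rw [← e1, ← e2]; exact hqT
    · have : (α * q.2 - β * q.1) / (α * q.1 + β * q.2) = -c := by
        rw [div_eq_iff hu0.ne']; linarith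
      rw [this, Real.arctan_neg, hat] at e1 e2
      apply H₄ (enorm2 q) (by linarith) (-ε) (by simpa using hδ₃.le)
      rw [← e1, ← e2]; exact hqT
  refine finite_of_card_le _ n fun F hF => ?_
  -- a common radius
  have hpt : ∀ γ ∈ F, ∃ z, z ∈ γ := fun γ hγ => by
    obtain ⟨z, hz, -⟩ := (hF γ hγ).2 1 one_pos 0
    exact ⟨z, hz⟩
  choose! pt hpt using hpt
  obtain ⟨ρ, hρ⟩ := (F.image fun γ => enorm2 (pt γ)).exists_le
  set r := max ρ R with hr
  have hrR : R ≤ r := le_max_right _ _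
  have hex : ∀ γ ∈ F, ∃ z, z ∈ γ ∧ enorm2 z = r := by
    intro γ hγ
    obtain ⟨z₁, hz₁, hz₁', -⟩ := (hF γ hγ).2 1 one_pos r
    obtain ⟨p, -, hγp⟩ := (hF γ hγ).1
    have hpre : IsPreconnected γ := by rw [hγp]; exact isPreconnected_connectedComponentIn
    have hle : enorm2 (pt γ) ≤ r :=
      (hρ _ (Finset.mem_image_of_mem _ hγ)).trans (le_max_left _ _)
    exact hpre.intermediate_value (hpt γ hγ) hz₁ enorm2_continuous.continuousOn ⟨hle, hz₁'.le⟩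
  choose! z hz hzr using hex
  have hu : ∀ γ ∈ F, 0 < α * (z γ).1 + β * (z γ).2 := fun γ hγ => by
    have h := hsector γ (hF γ hγ) _ (hz γ hγ)
    have h' := (abs_nonneg _).trans_lt h
    exact pos_of_mul_pos_right h' htan.le
  let S : Set (ℝ × ℝ) → ℝ := fun γ =>
    Real.arctan ((α * (z γ).2 - β * (z γ).1) / (α * (z γ).1 + β * (z γ).2))
  have hpol : ∀ γ ∈ F, (z γ).1 = r * (α * Real.cos (S γ) - β * Real.sin (S γ)) ∧
      (z γ).2 = r * (β * Real.cos (S γ) + α * Real.sin (S γ)) := fun γ hγ => by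
    have := polar α β h1 (z γ) (hu γ hγ)
    rwa [hzr γ hγ] at this
  have hinj : Set.InjOn S F := by
    intro γ hγ γ' hγ' hS
    have e : z γ = z γ' := by
      have e1 := hpol γ hγ
      have e2 := hpol γ' hγ'
      rw [hS] at e1
      exact Prod.ext (e1.1.trans e2.1.symm) (e1.2.trans e2.2.symm)
    obtain ⟨p, -, hp⟩ := (hF γ hγ).1
    obtain ⟨p', -, hp'⟩ := (hF γ' hγ').1
    have m1 := hz γ hγ
    have m2 := hz γ' hγ'
    rw [← e] at m2
    generalize z γ = w at m1 m2
    rw [hp] at m1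
    rw [hp'] at m2
    rw [hp, hp', connectedComponentIn_eq m1, connectedComponentIn_eq m2]
  rw [← Finset.card_image_of_injOn hinj]
  refine rolle_poly f r α β ε n ?_ _ ?_
  · intro s hs
    apply H₁ r (by linarith)
    rw [sub_zero]
    have := abs_le.mpr hs
    linarith
  · intro s hs
    obtain ⟨γ, hγ, rfl⟩ := Finset.mem_image.mp hs
    have hlt := abs_lt.mp (hsector γ (hF γ hγ) _ (hz γ hγ))
    have hu' := hu γ hγ
    refine ⟨⟨?_, ?_⟩, ?_⟩
    · rw [← hat, ← Real.arctan_neg]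
      apply Real.arctan_mono
      rw [le_div_iff₀ hu']; linarith [hlt.1]
    · conv_rhs => rw [← hat]
      apply Real.arctan_mono
      rw [div_le_iff₀ hu']; linarith [hlt.2]
    · rw [← (hpol γ hγ).1, ← (hpol γ hγ).2]
      obtain ⟨p, -, hp⟩ := (hF γ hγ).1
      have m1 := hz γ hγ
      generalize z γ = w at m1
      rw [hp] at m1
      exact (connectedComponentIn_subset _ _ m1).1

theorem ends_toward_point_le_two_mul_mult_sub_one
    (f : MvPolynomial (Fin 2) ℝ) (d : ℕ) (hd : f.totalDegree = d)
    (hfin : {p : ℝ × ℝ | IsCriticalPt f p}.Finite)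
    (hT : tangencyPoly f ≠ 0)
    (a b : ℝ) (hab : (a, b) ≠ ((0 : ℝ), (0 : ℝ)))
    (m : ℕ) (hm : 1 ≤ m)
    (hdvd : (C b * X 0 - C a * X 1) ^ m ∣ homogeneousComponent d f)
    (hndvd : ¬ (C b * X 0 - C a * X 1) ^ (m + 1) ∣ homogeneousComponent d f) :
    ∃ R₀ : ℝ, 0 < R₀ ∧ ∀ R : ℝ, R₀ ≤ R →
      (endsToward f R a b).Finite ∧ (endsToward f R a b).ncard ≤ 2 * (m - 1) := by
  have hpos : 0 < a ^ 2 + b ^ 2 := by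
    by_contra hle
    apply hab
    have ha : a = 0 := by nlinarith [sq_nonneg a, sq_nonneg b]
    have hb : b = 0 := by nlinarith [sq_nonneg a, sq_nonneg b]
    rw [ha, hb]
  have hlead := lead_ne _ d (homogeneousComponent_isHomogeneous d f) a b hpos.ne' m hdvd hndvd
  have hhom := tp_iter_hom m (homogeneousComponent_isHomogeneous d f)
  set N := Real.sqrt (a ^ 2 + b ^ 2) with hN
  have hN0 : 0 < N := Real.sqrt_pos.mpr hpos
  have hN2 : N ^ 2 = a ^ 2 + b ^ 2 := Real.sq_sqrt hpos.le
  obtain ⟨n, rfl⟩ : ∃ n, m = n + 1 := ⟨m - 1, by omega⟩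
  set α := N⁻¹ * a with hα
  set β := N⁻¹ * b with hβ
  have h1 : α ^ 2 + β ^ 2 = 1 := by
    rw [hα, hβ]; field_simp; linarith
  have hne1 : evalP (tangencyPoly^[n + 1] (homogeneousComponent d f)) α β ≠ 0 := by
    rw [hα, hβ, hom_evalP hhom]
    exact mul_ne_zero (by positivity) hlead
  have hne2 : evalP (tangencyPoly^[n + 1] (homogeneousComponent d f)) (-α) (-β) ≠ 0 := by
    rw [← neg_one_mul, ← neg_one_mul β, hom_evalP hhom]
    exact mul_ne_zero (pow_ne_zero _ (by norm_num)) hne1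
  obtain ⟨R₁, hR₁, H₁⟩ := side_bound f d hd α β h1 n hne1
  obtain ⟨R₂, hR₂, H₂⟩ := side_bound f d hd (-α) (-β) (by linarith [neg_sq α, neg_sq β]) n hne2
  refine ⟨max R₁ R₂, by positivity, fun R hR => ?_⟩
  obtain ⟨F₁, C₁⟩ := H₁ R ((le_max_left _ _).trans hR)
  obtain ⟨F₂, C₂⟩ := H₂ R ((le_max_right _ _).trans hR)
  have hsub : endsToward f R a b ⊆ sideEnds f R α β ∪ sideEnds f R (-α) (-β) := by
    rintro γ ⟨hcomp, z, hz, hzinf, hzdir⟩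
    by_contra hcon
    rw [Set.mem_union, not_or] at hcon
    obtain ⟨hc1, hc2⟩ := hcon
    have g1 : ¬ ∀ c > 0, ∀ M : ℝ, ∃ z ∈ γ, M < enorm2 z ∧
      |α * z.2 - β * z.1| < c * (α * z.1 + β * z.2) := fun h => hc1 ⟨hcomp, h⟩
    have g2 : ¬ ∀ c > 0, ∀ M : ℝ, ∃ z ∈ γ, M < enorm2 z ∧
      |-α * z.2 - -β * z.1| < c * (-α * z.1 + -β * z.2) := fun h => hc2 ⟨hcomp, h⟩
    push Not at g1 g2
    obtain ⟨c₁, hc₁, M₁, G₁⟩ := g1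
    obtain ⟨c₂, hc₂, M₂, G₂⟩ := g2
    set c := min c₁ c₂ with hc
    have hc0 : 0 < c := lt_min hc₁ hc₂
    have hδ : 0 < N * (c / (1 + c)) := by positivity
    have ev1 := hzinf.eventually_gt_atTop (max (max M₁ M₂) 0)
    have ev2 := hzdir.eventually (Metric.ball_mem_nhds 0 hδ)
    obtain ⟨k, hk1, hk2⟩ := (ev1.and ev2).exists
    have hzk := hz k
    generalize z k = p at hk1 hk2 hzk
    obtain ⟨⟨hM1, hM2⟩, hr0⟩ : (M₁ < enorm2 p ∧ M₂ < enorm2 p) ∧ 0 < enorm2 p := by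
      simpa using hk1
    rw [Real.dist_eq, sub_zero, abs_div, abs_of_pos hr0, div_lt_iff₀ hr0] at hk2
    have hw : |α * p.2 - β * p.1| < c / (1 + c) * enorm2 p := by
      have : α * p.2 - β * p.1 = -(N⁻¹ * (b * p.1 - a * p.2)) := by rw [hα, hβ]; ring
      rw [this, abs_neg, abs_mul, abs_of_pos (inv_pos.mpr hN0), inv_mul_lt_iff₀ hN0]
      linarith
    have hr2 : enorm2 p ^ 2 = (α * p.1 + β * p.2) ^ 2 + (α * p.2 - β * p.1) ^ 2 := by
      rw [enorm2, Real.sq_sqrt (by positivity)]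
      linear_combination (-(p.1 ^ 2 + p.2 ^ 2)) * h1
    have hru : enorm2 p ≤ |α * p.1 + β * p.2| + |α * p.2 - β * p.1| := by
      refine abs_le_of_sq_le_sq' ?_ (by positivity) |>.2
      rw [hr2, add_sq |α * p.1 + β * p.2|, sq_abs, sq_abs]
      have : 0 ≤ 2 * |α * p.1 + β * p.2| * |α * p.2 - β * p.1| := by positivity
      linarith
    have hw2 : |α * p.2 - β * p.1| < c * |α * p.1 + β * p.2| := by
      rw [div_mul_eq_mul_div, lt_div_iff₀ (by positivity)] at hw
      nlinarith
    rcases le_total 0 (α * p.1 + β * p.2) with hu | hu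
    · have := G₁ p hzk hM1
      rw [abs_of_nonneg hu] at hw2
      have hcc : c * (α * p.1 + β * p.2) ≤ c₁ * (α * p.1 + β * p.2) :=
        mul_le_mul_of_nonneg_right (min_le_left _ _) hu
      linarith
    · have := G₂ p hzk hM2
      rw [abs_of_nonpos hu] at hw2
      have hcc : c * (-(α * p.1 + β * p.2)) ≤ c₂ * (-(α * p.1 + β * p.2)) :=
        mul_le_mul_of_nonneg_right (min_le_right _ _) (by linarith)
      have e1 : -α * p.2 - -β * p.1 = -(α * p.2 - β * p.1) := by ring
      have e2 : -α * p.1 + -β * p.2 = -(α * p.1 + β * p.2) := by ring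
      rw [e1, e2, abs_neg] at this
      linarith
  have hF := F₁.union F₂
  refine ⟨hF.subset hsub, ?_⟩
  have := Set.ncard_le_ncard hsub hF
  have h3 := Set.ncard_union_le (sideEnds f R α β) (sideEnds f R (-α) (-β))
  omega
end
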